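/- arXiv:2505.06130 — 9 statements merged into one kernel-verified Lean document; each statement's English description precedes it below -/
import Mathlib

section
/- Let k, m ≥ 2 be integers and let r be a unit in ℤ/lcm(k,m)ℤ. Then every group is (k,m,r)-quasi-Honda if and only if at least one of the following holds: every group is (k,k,m,r)-quasi-Burnside; or gcd(k,m) ≤ 2 and every group is (k,k,m,r*)-quasi-Burnside, where r* is the unique unit in ℤ/lcm(k,m)ℤ with r* ≡ r (mod k) and r* ≡ -r (mod m). -/
/-!
The implications from quasi-Burnside to quasi-Honda hold group by group: `[x, u]` is `x` times a
conjugate of `x⁻¹`, and inverting `[a, w]` gives, up to conjugacy, another commutator of `a`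
(`honda_of_burnside`, `honda_of_burnside_star`).

Conversely, if `k = 2`, then `r` is odd and every group is `(2,2,m,r)`-quasi-Burnside by a
computation in dihedral groups (`quasiBurnside_two`). If `k ≥ 3`, the quasi-Honda property of the
groups `U(2)` and `U(2)/{±1}` alone forces `r ≡ ±1 (mod k)` and `r ≡ ±1 (mod m)`
(`eq_pm_one_of_honda`). If the two signs can be chosen equal, then `r = ±1`; otherwise
`gcd(k,m) ∣ 2` and `r* = ±1` exists. For the parameters `1` and `-1` every group is quasi-Burnside
for trivial reasons.

For `x = diag(1, exp(iθ))` in `U(2)`, the traces of the commutators `[x, w]` fill the interval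
`[2 cos θ, 2]` (`two_cos_le_trace_comm`, `exists_trace_comm`), and a commutator has determinant
one, so its trace determines its eigenvalues. Hence `[x, w]` can have eigenvalues `exp(±iφ)`
exactly when `cos θ ≤ cos φ`. With `θ = 2πa/k`, `φ = 2πc/m` this reads `|c|/m ≤ |a|/k`, where `|·|`
is the distance to the nearest multiple of the modulus, and the quasi-Honda property says that
this relation is preserved by `(a, c) ↦ (ρa, ρc)`, where `ρ` represents `r` (`dist0_test`). It
follows that multiplication by `ρ` preserves an interval `[-b, b]` modulo the larger of `k` and
`m`, and a unit that preserves a short interval is `±1` (`eq_one_or_neg_one_of_interval`). With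
`ρ = ±1` for one modulus, a comparison of neighbouring fractions gives the same for the other.
Commutators of order two in `U(2)` are scalar and carry too little information when `m = 2`; there
the quotient `U(2)/{±1}` is used instead (`dist0_test_two`).
-/

/-- A group `G` is `(k,l,m,r)`-quasi-Burnside (with `r` a unit of `ZMod n`, where
`n = lcm(k,l,m)`; note `lcm(k,k,m) = lcm(k,m)`). -/
def IsQuasiBurnsideWith (k l m n : ℕ) (r : (ZMod n)ˣ) (G : Type*) [Group G] : Prop :=
  ∀ ρ : ℤ, ((ρ : ZMod n) = (r : ZMod n)) →
    ∀ x y z : G, x * y = z → x ^ k = 1 → y ^ l = 1 → z ^ m = 1 →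
      ∃ x' y' z' : G, x' * y' = z' ∧
        IsConj (x ^ ρ) x' ∧ IsConj (y ^ ρ) y' ∧ IsConj (z ^ ρ) z'

/-- A group `G` is `(k,m,r)`-quasi-Honda (with `r` a unit of `ZMod n`, where
`n = lcm(k,m)`). -/
def IsQuasiHondaWith (k m n : ℕ) (r : (ZMod n)ˣ) (G : Type*) [Group G] : Prop :=
  ∀ ρ : ℤ, ((ρ : ZMod n) = (r : ZMod n)) →
    ∀ x u z : G, x * u * x⁻¹ * u⁻¹ = z → x ^ k = 1 → z ^ m = 1 →
      ∃ w : G, IsConj (x ^ ρ * w * (x ^ ρ)⁻¹ * w⁻¹) (z ^ ρ)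

universe u

namespace QuasiHonda

open Real

/-! ### Testing the quasi-Honda property on quotients -/

/-- The quasi-Honda property of `U ⧸ N`, spelled out on representatives in `U`. -/
theorem exists_lift {U : Type} [Group U] (N : Subgroup U) [N.Normal] {k m n : ℕ} {r : (ZMod n)ˣ}
    (h : ∀ (G : Type u) [Group G], IsQuasiHondaWith k m n r G)
    {ρ : ℕ} (hρ : (ρ : ZMod n) = r) (X V : U) (hX : X ^ k ∈ N)
    (hZ : (X * V * X⁻¹ * V⁻¹) ^ m ∈ N) :
    ∃ W g s : U, s ∈ N ∧
      g * (X ^ ρ * W * (X ^ ρ)⁻¹ * W⁻¹) * g⁻¹ * s = (X * V * X⁻¹ * V⁻¹) ^ ρ := by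
  have e : ULift.{u} (U ⧸ N) ≃* U ⧸ N := MulEquiv.ulift
  obtain ⟨w, hw⟩ := h (ULift.{u} (U ⧸ N)) ρ (by exact_mod_cast hρ) (e.symm X) (e.symm V)
    (e.symm ((X * V * X⁻¹ * V⁻¹ : U) : U ⧸ N)) (by simp)
    (by rw [← map_pow, ← QuotientGroup.mk_pow, (QuotientGroup.eq_one_iff _).2 hX, map_one])
    (by rw [← map_pow, ← QuotientGroup.mk_pow, (QuotientGroup.eq_one_iff _).2 hZ, map_one])
  obtain ⟨c, hc⟩ := isConj_iff.1 hw
  obtain ⟨W, hW⟩ := QuotientGroup.mk_surjective (e w)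
  obtain ⟨g, hg⟩ := QuotientGroup.mk_surjective (e c)
  have hc' := congrArg e hc
  simp only [zpow_natCast, map_mul, map_inv, map_pow, MulEquiv.apply_symm_apply, ← hW, ← hg] at hc'
  refine ⟨W, g, (g * (X ^ ρ * W * (X ^ ρ)⁻¹ * W⁻¹) * g⁻¹)⁻¹ * (X * V * X⁻¹ * V⁻¹) ^ ρ, ?_, ?_⟩
  · rw [← QuotientGroup.eq]
    exact_mod_cast hc'
  · group

/-! ### Commutators in `U(2)` -/

/-- The unitary matrix `diag(1, exp(iθ))`. -/
noncomputable def diagU (θ : ℝ) : Matrix.unitaryGroup (Fin 2) ℂ :=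
  ⟨!![1, 0; 0, Complex.exp (θ * Complex.I)], by
    rw [Matrix.mem_unitaryGroup_iff]
    ext i j
    fin_cases i <;> fin_cases j <;>
      simp [Matrix.mul_apply, Fin.sum_univ_two, ← Complex.exp_conj, ← Complex.exp_add]⟩

theorem diagU_add (α β : ℝ) : diagU (α + β) = diagU α * diagU β := by
  apply Subtype.ext
  simp [diagU, add_mul, Complex.exp_add]

theorem diagU_nat_mul (n : ℕ) (θ : ℝ) : diagU (n * θ) = diagU θ ^ n := by
  induction n with
  | zero => apply Subtype.ext; simp [diagU, Matrix.one_fin_two]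
  | succ n ih => rw [pow_succ, ← ih, ← diagU_add]; congr 1; push_cast; ring

theorem diagU_int_mul_two_pi (z : ℤ) : diagU (z * (2 * π)) = 1 := by
  apply Subtype.ext
  simp [diagU, Matrix.one_fin_two]
  convert Complex.exp_int_mul_two_pi_mul_I z using 2
  ring

/-- The real rotation matrix of angle `φ`. -/
noncomputable def rotU (φ : ℝ) : Matrix.unitaryGroup (Fin 2) ℂ :=
  ⟨!![(Real.cos φ : ℂ), -(Real.sin φ : ℂ); (Real.sin φ : ℂ), (Real.cos φ : ℂ)], by
    have h : (Real.cos φ : ℂ) * Real.cos φ + Real.sin φ * Real.sin φ = 1 := by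
      have := Real.cos_sq_add_sin_sq φ
      rw [sq, sq] at this
      exact_mod_cast this
    rw [Matrix.mem_unitaryGroup_iff]
    ext i j
    fin_cases i <;> fin_cases j <;>
      simp only [Matrix.mul_apply, Fin.sum_univ_two, Matrix.star_apply] <;>
      simp [-Complex.ofReal_cos, -Complex.ofReal_sin] <;>
      first | linear_combination h | ring⟩

theorem trace_comm_rotU (θ φ : ℝ) :
    ((diagU θ * rotU φ * (diagU θ)⁻¹ * (rotU φ)⁻¹ : Matrix.unitaryGroup (Fin 2) ℂ) :
      Matrix (Fin 2) (Fin 2) ℂ).trace =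
      ((2 * (1 - (1 - Real.cos θ) * Real.sin φ ^ 2) : ℝ) : ℂ) := by
  have hc : Complex.exp (θ * Complex.I) + Complex.exp (-(θ * Complex.I)) = 2 * Real.cos θ := by
    rw [Complex.ofReal_cos, Complex.two_cos, neg_mul]
  have h : (Real.cos φ : ℂ) * Real.cos φ + Real.sin φ * Real.sin φ = 1 := by
    have := Real.cos_sq_add_sin_sq φ
    rw [sq, sq] at this
    exact_mod_cast this
  simp only [Matrix.trace_fin_two, Submonoid.coe_mul, Matrix.UnitaryGroup.inv_val,
    Matrix.mul_apply, Fin.sum_univ_two, Matrix.star_apply, diagU, rotU]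
  simp [-Complex.ofReal_cos, -Complex.ofReal_sin, ← Complex.exp_conj]
  have he : Complex.exp (-(θ * Complex.I)) * Complex.exp (θ * Complex.I) = 1 := by
    rw [← Complex.exp_add]; simp
  linear_combination (Real.sin φ : ℂ) ^ 2 * hc + 2 * h + (Real.cos φ : ℂ) ^ 2 * he

/-- Writing the trace as `∑ |W i j|² xᵢ / xⱼ`, where the squared moduli in each row of `W` sum
to `1`, gives the lower bound. -/
theorem two_cos_le_trace_comm (θ : ℝ) (W : Matrix.unitaryGroup (Fin 2) ℂ) :
    2 * Real.cos θ ≤ ((diagU θ * W * (diagU θ)⁻¹ * W⁻¹ : Matrix.unitaryGroup (Fin 2) ℂ) :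
      Matrix (Fin 2) (Fin 2) ℂ).trace.re := by
  have hW := Matrix.mem_unitaryGroup_iff.1 W.2
  have h0 := congrArg Complex.re (congrFun (congrFun hW 0) 0)
  have h1 := congrArg Complex.re (congrFun (congrFun hW 1) 1)
  simp [Matrix.mul_apply, Fin.sum_univ_two, Matrix.star_apply] at h0 h1
  simp only [Matrix.trace_fin_two, Submonoid.coe_mul, Matrix.UnitaryGroup.inv_val,
    Matrix.mul_apply, Fin.sum_univ_two, Matrix.star_apply, diagU]
  simp [Complex.exp_ofReal_mul_I_re, Complex.exp_ofReal_mul_I_im]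
  have hc := Real.cos_le_one θ
  have hcs := Real.cos_sq_add_sin_sq θ
  generalize (W : Matrix (Fin 2) (Fin 2) ℂ) = M at *
  have key : 0 ≤ (1 - Real.cos θ) * ((M 0 0).re ^ 2 + (M 0 0).im ^ 2 + (M 1 1).re ^ 2 +
      (M 1 1).im ^ 2) := mul_nonneg (sub_nonneg.2 hc) (by positivity)
  linear_combination key - Real.cos θ * h0 - Real.cos θ * h1 -
    ((M 1 1).re ^ 2 + (M 1 1).im ^ 2) * hcs

/-- The lower bound `two_cos_le_trace_comm` is sharp, and every value up to `2` is a trace. -/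
theorem exists_trace_comm {θ γ : ℝ} (h : Real.cos θ ≤ γ) (hγ : γ ≤ 1) :
    ∃ V : Matrix.unitaryGroup (Fin 2) ℂ,
      ((diagU θ * V * (diagU θ)⁻¹ * V⁻¹ : Matrix.unitaryGroup (Fin 2) ℂ) :
        Matrix (Fin 2) (Fin 2) ℂ).trace = ((2 * γ : ℝ) : ℂ) := by
  -- the rotation angle is chosen with `sin² = s`, so that the trace is `2 (1 - (1 - cos θ) s)`
  have h0 : 0 ≤ 1 - Real.cos θ := by linarith
  set s := (1 - γ) / (1 - Real.cos θ) with hs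
  have hs0 : 0 ≤ s := div_nonneg (by linarith) h0
  have hs1 : s ≤ 1 := div_le_one_of_le₀ (by linarith) h0
  have hmul : (1 - Real.cos θ) * s = 1 - γ := by
    rcases h0.eq_or_lt with h' | h'
    · rw [← h']; linarith
    · rw [hs]; field_simp
  refine ⟨rotU (Real.arcsin (√s)), ?_⟩
  rw [trace_comm_rotU, Real.sin_arcsin (by linarith [Real.sqrt_nonneg s])
    (Real.sqrt_le_one.2 hs1), Real.sq_sqrt hs0, hmul]
  congr 2; ring

theorem det_comm (X V : Matrix.unitaryGroup (Fin 2) ℂ) :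
    ((X * V * X⁻¹ * V⁻¹ : Matrix.unitaryGroup (Fin 2) ℂ) : Matrix (Fin 2) (Fin 2) ℂ).det = 1 := by
  have h : ∀ A : Matrix.unitaryGroup (Fin 2) ℂ, (A : Matrix (Fin 2) (Fin 2) ℂ).det *
      ((A⁻¹ : Matrix.unitaryGroup (Fin 2) ℂ) : Matrix (Fin 2) (Fin 2) ℂ).det = 1 := by
    intro A
    rw [← Matrix.det_mul, ← Submonoid.coe_mul, mul_inv_cancel]
    simp
  simp only [Submonoid.coe_mul, Matrix.det_mul]
  linear_combination (V : Matrix (Fin 2) (Fin 2) ℂ).det *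
    ((V⁻¹ : Matrix.unitaryGroup (Fin 2) ℂ) : Matrix (Fin 2) (Fin 2) ℂ).det * h X + h V

theorem trace_conj (g A : Matrix.unitaryGroup (Fin 2) ℂ) :
    ((g * A * g⁻¹ : Matrix.unitaryGroup (Fin 2) ℂ) : Matrix (Fin 2) (Fin 2) ℂ).trace =
      (A : Matrix (Fin 2) (Fin 2) ℂ).trace := by
  rw [Submonoid.coe_mul, Matrix.trace_mul_comm, ← Submonoid.coe_mul, inv_mul_cancel_left]

/-- Cayley–Hamilton for a matrix of determinant one. -/
theorem sq_eq_of_det {Z : Matrix (Fin 2) (Fin 2) ℂ} (hd : Z.det = 1) :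
    Z ^ 2 = Z.trace • Z - 1 := by
  rw [Matrix.det_fin_two] at hd
  ext i j
  fin_cases i <;> fin_cases j <;>
    simp [sq, Matrix.mul_apply, Fin.sum_univ_two, Matrix.trace_fin_two] <;>
    first | linear_combination -hd | ring

theorem trace_pow {Z : Matrix (Fin 2) (Fin 2) ℂ} {φ : ℝ} (hd : Z.det = 1)
    (ht : Z.trace = ((2 * Real.cos φ : ℝ) : ℂ)) (n : ℕ) :
    (Z ^ n).trace = ((2 * Real.cos (n * φ) : ℝ) : ℂ) := by
  induction n using Nat.twoStepInduction with
  | zero => simp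
  | one => simpa using ht
  | more n h1 h2 =>
    rw [pow_add, sq_eq_of_det hd, mul_sub, Matrix.mul_smul, ← pow_succ, mul_one, Matrix.trace_sub,
      Matrix.trace_smul, h1, h2, ht, smul_eq_mul, ← Complex.ofReal_mul, ← Complex.ofReal_sub]
    congr 1
    have e1 : ((n + 2 : ℕ) : ℝ) * φ = ((n + 1 : ℕ) : ℝ) * φ + φ := by push_cast; ring
    have e2 : (n : ℝ) * φ = ((n + 1 : ℕ) : ℝ) * φ - φ := by push_cast; ring
    rw [e1, e2, Real.cos_add, Real.cos_sub]
    ring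

theorem sin_smul_pow {Z : Matrix (Fin 2) (Fin 2) ℂ} {φ : ℝ} (hd : Z.det = 1)
    (ht : Z.trace = ((2 * Real.cos φ : ℝ) : ℂ)) (n : ℕ) :
    (Real.sin φ : ℂ) • Z ^ (n + 1) =
      (Real.sin ((n + 1 : ℕ) * φ) : ℂ) • Z - (Real.sin (n * φ) : ℂ) • (1 : Matrix _ _ ℂ) := by
  induction n with
  | zero => simp
  | succ n ih =>
    have e1 : ((n + 1 + 1 : ℕ) : ℝ) * φ = ((n + 1 : ℕ) : ℝ) * φ + φ := by push_cast; ring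
    have e2 : (n : ℝ) * φ = ((n + 1 : ℕ) : ℝ) * φ - φ := by push_cast; ring
    rw [pow_succ, ← Matrix.smul_mul, ih, sub_mul, Matrix.smul_mul, ← sq, sq_eq_of_det hd, ht,
      Matrix.smul_mul, one_mul, smul_sub, smul_smul, sub_right_comm, ← sub_smul, e1, e2]
    congr 2
    rw [Real.sin_add, Real.sin_sub]
    push_cast
    ring

/-- A determinant-one matrix with distinct eigenvalues `exp(±iφ)` satisfies `Z ^ m = 1` as soon
as these are `m`-th roots of unity. -/
theorem pow_eq_one_of_trace {Z : Matrix (Fin 2) (Fin 2) ℂ} {φ : ℝ} (hd : Z.det = 1)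
    (ht : Z.trace = ((2 * Real.cos φ : ℝ) : ℂ)) (hs : Real.sin φ ≠ 0) {m : ℕ} (hm : 1 ≤ m)
    {z : ℤ} (hz : m * φ = z * (2 * π)) : Z ^ m = 1 := by
  obtain ⟨n, rfl⟩ := Nat.exists_eq_add_of_le' hm
  have h := sin_smul_pow hd ht n
  have e : (n : ℝ) * φ = -φ + z * (2 * π) := by rw [← hz]; push_cast; ring
  have e0 : Real.sin (z * (2 * π)) = 0 := by
    have := Real.sin_int_mul_pi (z * 2)
    push_cast at this
    rwa [mul_assoc] at this
  rw [hz, e, Real.sin_add_int_mul_two_pi, e0, Real.sin_neg] at h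
  have hs' : (Real.sin φ : ℂ) ≠ 0 := by exact_mod_cast hs
  apply smul_right_injective _ hs'
  simpa [-Complex.ofReal_sin] using h

/-- The test in `U(2)`: for a `k`-th root of unity `exp(iθ)` and a non-real `m`-th root of unity
`exp(iφ)`, the inequality `cos θ ≤ cos φ` says that a commutator of `diag(1, exp(iθ))` can have
eigenvalues `exp(±iφ)`; hence it persists under `ρ`-th powers. -/
theorem cos_le_cos_of_honda {k m n : ℕ} {r : (ZMod n)ˣ} (hm : 1 ≤ m)
    (h : ∀ (G : Type u) [Group G], IsQuasiHondaWith k m n r G)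
    {ρ : ℕ} (hρ : (ρ : ZMod n) = r) {θ φ : ℝ} {a c : ℤ} (ha : k * θ = a * (2 * π))
    (hc : m * φ = c * (2 * π)) (hs : Real.sin φ ≠ 0) (hle : Real.cos θ ≤ Real.cos φ) :
    Real.cos (ρ * θ) ≤ Real.cos (ρ * φ) := by
  obtain ⟨V, hV⟩ := exists_trace_comm hle (Real.cos_le_one φ)
  obtain ⟨W, g, s, hs1, hW⟩ := exists_lift (⊥ : Subgroup (Matrix.unitaryGroup (Fin 2) ℂ)) h hρ
    (diagU θ) V
    (by rw [← diagU_nat_mul, ha, diagU_int_mul_two_pi]; exact Subgroup.one_mem _)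
    (by
      rw [Subgroup.mem_bot]
      apply Subtype.ext
      exact pow_eq_one_of_trace (det_comm _ _) hV hs hm hc)
  rw [Subgroup.mem_bot] at hs1
  rw [hs1, mul_one, ← diagU_nat_mul] at hW
  have ht := trace_pow (det_comm _ _) hV ρ
  rw [← SubmonoidClass.coe_pow, ← hW, trace_conj] at ht
  have := two_cos_le_trace_comm (ρ * θ) W
  rw [ht, Complex.ofReal_re] at this
  linarith

/-- The test in `U(2)/{±1}` for `m = 2`, with a commutator `z` that lifts to a matrix of square
`-1`. As `ρ` is odd, every lift of `z ^ ρ` has trace `0`. -/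
theorem cos_nonpos_of_honda {k n : ℕ} {r : (ZMod n)ˣ}
    (h : ∀ (G : Type u) [Group G], IsQuasiHondaWith k 2 n r G)
    {ρ : ℕ} (hρ : (ρ : ZMod n) = r) (hodd : Odd ρ) {θ : ℝ} {a : ℤ} (ha : k * θ = a * (2 * π))
    (hle : Real.cos θ ≤ 0) : Real.cos (ρ * θ) ≤ 0 := by
  have hle' : Real.cos θ ≤ Real.cos (π / 2) := by rwa [Real.cos_pi_div_two]
  obtain ⟨V, hV⟩ := exists_trace_comm hle' (Real.cos_le_one _)
  let N : Subgroup (Matrix.unitaryGroup (Fin 2) ℂ) := Subgroup.zpowers (-1)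
  have hN : N.Normal := ⟨fun x hx g => by
    obtain ⟨t, rfl⟩ := Subgroup.mem_zpowers_iff.1 hx
    have hcomm : Commute g ((-1) ^ t) := (Commute.neg_one_right g).zpow_right t
    rwa [hcomm.eq, mul_inv_cancel_right]⟩
  obtain ⟨W, g, s, hs1, hW⟩ := exists_lift N h hρ (diagU θ) V
    (by rw [← diagU_nat_mul, ha, diagU_int_mul_two_pi]; exact Subgroup.one_mem _)
    (by
      convert Subgroup.mem_zpowers (-1 : Matrix.unitaryGroup (Fin 2) ℂ)
      apply Subtype.ext
      rw [SubmonoidClass.coe_pow, sq_eq_of_det (det_comm _ _), hV]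
      simp [Unitary.coe_neg])
  have ht := trace_pow (det_comm _ _) hV ρ
  have hc0 : Real.cos (ρ * (π / 2)) = 0 := by
    obtain ⟨t, rfl⟩ := hodd
    rw [Real.cos_eq_zero_iff]
    exact ⟨t, by push_cast; ring⟩
  rw [← SubmonoidClass.coe_pow, ← hW, hc0] at ht
  have ht0 : ((g * (diagU θ ^ ρ * W * (diagU θ ^ ρ)⁻¹ * W⁻¹) * g⁻¹ :
      Matrix.unitaryGroup (Fin 2) ℂ) : Matrix (Fin 2) (Fin 2) ℂ).trace = 0 := by
    obtain ⟨t, rfl⟩ := Subgroup.mem_zpowers_iff.1 hs1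
    rcases Int.even_or_odd t with ht' | ht'
    · rw [ht'.neg_one_zpow, mul_one] at ht
      rw [ht]; simp
    · obtain ⟨q, rfl⟩ := ht'
      rw [zpow_add, zpow_mul, zpow_one, zpow_two, neg_one_mul, neg_neg, one_zpow, one_mul,
        mul_neg, mul_one, Unitary.coe_neg, Matrix.trace_neg] at ht
      rw [← neg_neg (Matrix.trace _), ht]; simp
  rw [trace_conj, ← diagU_nat_mul] at ht0
  have := two_cos_le_trace_comm (ρ * θ) W
  rw [ht0, Complex.zero_re] at this
  linarith

/-! ### Distances to zero in `ZMod n` -/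

/-- The distance from a representative of `a` to the nearest multiple of `n`. -/
def dist0 {n : ℕ} (a : ZMod n) : ℕ := a.valMinAbs.natAbs

theorem two_mul_dist0_le {n : ℕ} [NeZero n] (a : ZMod n) : 2 * dist0 a ≤ n := by
  have := ZMod.natAbs_valMinAbs_le a
  unfold dist0
  omega

theorem dist0_eq_zero {n : ℕ} {a : ZMod n} : dist0 a = 0 ↔ a = 0 := by
  simp [dist0]

theorem dist0_neg {n : ℕ} (a : ZMod n) : dist0 (-a) = dist0 a :=
  ZMod.natAbs_valMinAbs_neg a

theorem dist0_natCast {n j : ℕ} (h : 2 * j ≤ n) : dist0 (j : ZMod n) = j := by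
  rw [dist0, ZMod.valMinAbs_natCast_of_le_half (by omega)]
  simp

theorem dist0_one {n : ℕ} (h : 2 ≤ n) : dist0 (1 : ZMod n) = 1 := by
  have := dist0_natCast (n := n) (j := 1) h
  simpa using this

theorem eq_or_eq_neg_dist0 {n : ℕ} (a : ZMod n) :
    a = (dist0 a : ZMod n) ∨ a = -(dist0 a : ZMod n) := by
  have h := ZMod.coe_valMinAbs a
  rcases Int.natAbs_eq a.valMinAbs with h' | h' <;> rw [h'] at h
  · left; rw [Int.cast_natCast] at h; exact h.symm
  · right; rw [Int.cast_neg, Int.cast_natCast] at h; exact h.symm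

theorem eq_one_or_neg_one_of_dist0_le {n : ℕ} (hn : 2 ≤ n) (s : (ZMod n)ˣ)
    (h : dist0 (s : ZMod n) ≤ 1) : s = 1 ∨ s = -1 := by
  have : Fact (1 < n) := ⟨hn⟩
  have h0 : dist0 (s : ZMod n) ≠ 0 := fun h0 => s.ne_zero (dist0_eq_zero.1 h0)
  have h1 : dist0 (s : ZMod n) = 1 := by omega
  rcases eq_or_eq_neg_dist0 (s : ZMod n) with h' | h' <;> rw [h1] at h'
  · left; ext; simpa using h'
  · right; ext; simpa using h'

theorem cos_intCast {n : ℕ} [NeZero n] (z : ℤ) :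
    Real.cos (z * (2 * π) / n) = Real.cos (dist0 (z : ZMod n) * (2 * π) / n) := by
  have hn : (n : ℝ) ≠ 0 := Nat.cast_ne_zero.2 (NeZero.ne n)
  obtain ⟨q, hq⟩ : (n : ℤ) ∣ z - (z : ZMod n).valMinAbs := by
    rw [← ZMod.intCast_eq_intCast_iff_dvd_sub, ZMod.coe_valMinAbs]
  have hz : (z : ℝ) = ((z : ZMod n).valMinAbs : ℝ) + n * q := by
    have : z = (z : ZMod n).valMinAbs + n * q := by linarith
    exact_mod_cast this
  have e : (z : ℝ) * (2 * π) / n = ((z : ZMod n).valMinAbs : ℝ) * (2 * π) / n + q * (2 * π) := by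
    conv_lhs => rw [hz]
    field_simp
  rw [e, Real.cos_add_int_mul_two_pi, dist0, Nat.cast_natAbs, Int.cast_abs]
  rcases abs_choice ((z : ZMod n).valMinAbs : ℝ) with h | h <;> rw [h]
  rw [neg_mul, neg_div, Real.cos_neg]

theorem cos_dist0_mul {n : ℕ} [NeZero n] (ρ : ℕ) (b : ZMod n) :
    Real.cos (dist0 ((ρ : ZMod n) * b) * (2 * π) / n) =
      Real.cos (ρ * (dist0 b * (2 * π) / n)) := by
  have h1 : dist0 ((ρ : ZMod n) * b) = dist0 (((ρ * dist0 b : ℕ) : ℤ) : ZMod n) := by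
    push_cast
    rcases eq_or_eq_neg_dist0 b with hb | hb
    · conv_lhs => rw [hb]
    · conv_lhs => rw [hb, mul_neg, dist0_neg]
  rw [h1, ← cos_intCast]
  congr 1; push_cast; ring

theorem cos_le_cos_iff {k m x y : ℕ} (hk : 0 < k) (hm : 0 < m) (hx : 2 * x ≤ k) (hy : 2 * y ≤ m) :
    Real.cos (x * (2 * π) / k) ≤ Real.cos (y * (2 * π) / m) ↔ y * k ≤ x * m := by
  have key : ∀ {n t : ℕ}, 0 < n → 2 * t ≤ n → (t : ℝ) * (2 * π) / n ∈ Set.Icc 0 π := by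
    intro n t hn ht
    have hn' : (0 : ℝ) < n := Nat.cast_pos.2 hn
    have ht' : (2 : ℝ) * t ≤ n := by exact_mod_cast ht
    refine ⟨by positivity, ?_⟩
    rw [div_le_iff₀ hn']
    nlinarith [Real.pi_pos]
  have hk' : (0 : ℝ) < k := Nat.cast_pos.2 hk
  have hm' : (0 : ℝ) < m := Nat.cast_pos.2 hm
  rw [Real.strictAntiOn_cos.le_iff_ge (key hk hx) (key hm hy), div_le_div_iff₀ hm' hk']
  have e1 : (y : ℝ) * (2 * π) * k = (2 * π) * ((y * k : ℕ) : ℝ) := by push_cast; ring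
  have e2 : (x : ℝ) * (2 * π) * m = (2 * π) * ((x * m : ℕ) : ℝ) := by push_cast; ring
  rw [e1, e2, mul_le_mul_iff_right₀ Real.two_pi_pos, Nat.cast_le]

/-- The `U(2)` test in arithmetic form: multiplication by `ρ` preserves the inequality
`|c| / m ≤ |a| / k` between residue classes `c` modulo `m` (with `2c ≠ 0`) and `a` modulo `k`. -/
theorem dist0_test {k m n : ℕ} [NeZero k] [NeZero m] {r : (ZMod n)ˣ}
    (h : ∀ (G : Type u) [Group G], IsQuasiHondaWith k m n r G)
    {ρ : ℕ} (hρ : (ρ : ZMod n) = r) (a : ZMod k) (c : ZMod m) (hc : 0 < dist0 c)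
    (hc' : 2 * dist0 c < m) (hle : dist0 c * k ≤ dist0 a * m) :
    dist0 ((ρ : ZMod m) * c) * k ≤ dist0 ((ρ : ZMod k) * a) * m := by
  have hk : 0 < k := NeZero.pos k
  have hm : 0 < m := NeZero.pos m
  have hk' : (k : ℝ) ≠ 0 := Nat.cast_ne_zero.2 hk.ne'
  have hm' : (m : ℝ) ≠ 0 := Nat.cast_ne_zero.2 hm.ne'
  rw [← cos_le_cos_iff hk hm (two_mul_dist0_le _) (two_mul_dist0_le _)] at hle ⊢
  rw [cos_dist0_mul ρ a, cos_dist0_mul ρ c]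
  refine cos_le_cos_of_honda (a := dist0 a) (c := dist0 c) hm h hρ ?_ ?_ ?_ hle
  · push_cast; field_simp
  · push_cast; field_simp
  · apply ne_of_gt
    have h2 : (2 : ℝ) * dist0 c < m := by exact_mod_cast hc'
    have h3 : (0 : ℝ) < dist0 c := by exact_mod_cast hc
    have h4 : (0 : ℝ) < m := by positivity
    apply Real.sin_pos_of_pos_of_lt_pi
    · have := Real.pi_pos
      positivity
    · rw [div_lt_iff₀ h4]
      nlinarith [Real.pi_pos]

theorem dist0_test_two {k n : ℕ} [NeZero k] {r : (ZMod n)ˣ}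
    (h : ∀ (G : Type u) [Group G], IsQuasiHondaWith k 2 n r G)
    {ρ : ℕ} (hρ : (ρ : ZMod n) = r) (hodd : Odd ρ) (a : ZMod k) (hle : k ≤ 4 * dist0 a) :
    k ≤ 4 * dist0 ((ρ : ZMod k) * a) := by
  have hk : 0 < k := NeZero.pos k
  have hk' : (k : ℝ) ≠ 0 := Nat.cast_ne_zero.2 hk.ne'
  have e0 : Real.cos ((1 : ℕ) * (2 * π) / (4 : ℕ)) = 0 := by
    rw [← Real.cos_pi_div_two]; congr 1; push_cast; ring
  have i1 : ∀ b : ZMod k, Real.cos (dist0 b * (2 * π) / k) ≤ 0 ↔ k ≤ 4 * dist0 b := by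
    intro b
    rw [← e0, cos_le_cos_iff hk (by norm_num) (two_mul_dist0_le _) (by norm_num)]
    omega
  rw [← i1] at hle ⊢
  rw [cos_dist0_mul]
  exact cos_nonpos_of_honda (a := dist0 a) h hρ hodd (by push_cast; field_simp) hle

/-! ### Arithmetic of the invariant sets -/

/-- Since `s` has finite order, a set invariant under multiplication by `s` is also invariant
under `s⁻¹`. -/
theorem inv_invariant {n : ℕ} [NeZero n] (s : (ZMod n)ˣ) (P : ZMod n → Prop)
    (h : ∀ x, P x → P (s * x)) (x : ZMod n) (hx : P (s * x)) : P x := by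
  have hpow : ∀ t : ℕ, P ((s : ZMod n) ^ t * (s * x)) := by
    intro t
    induction t with
    | zero => simpa using hx
    | succ t ih => rw [pow_succ', mul_assoc]; exact h _ ih
  obtain ⟨t, ht, hs⟩ := isOfFinOrder_iff_pow_eq_one.1 (isOfFinOrder_of_finite s)
  have := hpow (t - 1)
  rw [← mul_assoc, ← pow_succ, Nat.sub_add_cancel ht, ← Units.val_pow_eq_pow_val, hs] at this
  simpa using this

/-- A unit preserving the interval `[-b, b]`, where `1 ≤ b ≤ n / 3`, is `±1`: the interval is left
at just one point by the shift by `1`, hence also by the shift by `s`; but the shift by `s` with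
`2 ≤ |s| ≤ b` reaches both `b + 1` and `b + 2` from inside. -/
theorem eq_one_or_neg_one_of_interval {n b : ℕ} (hb : 1 ≤ b) (hbn : 3 * b ≤ n) (s : (ZMod n)ˣ)
    (h : ∀ x : ZMod n, dist0 ((s : ZMod n) * x) ≤ b ↔ dist0 x ≤ b) : s = 1 ∨ s = -1 := by
  have : NeZero n := ⟨by omega⟩
  by_contra hcon
  have hs1 : 2 ≤ dist0 (s : ZMod n) := by
    by_contra hlt
    exact hcon (eq_one_or_neg_one_of_dist0_le (by omega) s (by omega))
  have hsb : dist0 (s : ZMod n) ≤ b := by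
    have := (h 1).2 (by rw [dist0_one (by omega)]; exact hb)
    simpa using this
  -- it suffices to treat the representative `q ≥ 0` of `±s`
  obtain ⟨t, ht, htq⟩ : ∃ t : (ZMod n)ˣ, (t : ZMod n) = (dist0 (s : ZMod n) : ZMod n) ∧
      ∀ x : ZMod n, dist0 ((t : ZMod n) * x) ≤ b ↔ dist0 x ≤ b := by
    rcases eq_or_eq_neg_dist0 (s : ZMod n) with h' | h'
    · exact ⟨s, h', h⟩
    · refine ⟨-s, by rw [Units.val_neg]; conv_lhs => rw [h', neg_neg], fun x => ?_⟩
      rw [Units.val_neg, neg_mul, dist0_neg]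
      exact h x
  generalize dist0 (s : ZMod n) = q at *
  -- the single exit point of the shift by `1`
  have hexit : ∀ y : ZMod n, b < dist0 y → dist0 (y - 1) ≤ b → y = ((b + 1 : ℕ) : ZMod n) := by
    intro y hy hy1
    rcases eq_or_eq_neg_dist0 (y - 1) with h' | h'
    · have e : y = ((dist0 (y - 1) + 1 : ℕ) : ZMod n) := by
        push_cast; rw [← h']; ring
      have : dist0 y ≤ dist0 (y - 1) + 1 := by
        by_cases h2 : 2 * (dist0 (y - 1) + 1) ≤ n
        · conv_lhs => rw [e, dist0_natCast h2]
        · have := two_mul_dist0_le y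
          omega
      have hb' : dist0 (y - 1) = b := by omega
      rw [e, hb']
    · exfalso
      rcases Nat.eq_zero_or_pos (dist0 (y - 1)) with h0 | h0
      · rw [h0] at h'
        have : y = 1 := by
          rw [Nat.cast_zero, neg_zero, sub_eq_zero] at h'; exact h'
        rw [this, dist0_one (by omega)] at hy
        omega
      · obtain ⟨d, hd⟩ := Nat.exists_eq_add_of_le' h0
        have e : y = -(d : ZMod n) := by
          rw [hd] at h'; push_cast at h'; linear_combination h'
        have := two_mul_dist0_le (y - 1)
        rw [e, dist0_neg, dist0_natCast (by omega)] at hy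
        omega
  by_cases hsmall : 2 * b + 3 ≤ n
  · have hout : ∀ e : ℕ, b < e → e ≤ b + 2 → b < dist0 (e : ZMod n) := by
      intro e h1 h2
      by_cases h3 : 2 * e ≤ n
      · rwa [dist0_natCast h3]
      · have e1 : (e : ZMod n) = -((n - e : ℕ) : ZMod n) := by
          rw [Nat.cast_sub (by omega)]; simp
        rw [e1, dist0_neg, dist0_natCast (by omega)]
        omega
    have hpt : ∀ e : ℕ, b < e → e ≤ b + 2 → (e : ZMod n) = t * ((b + 1 : ℕ) : ZMod n) := by
      intro e h1 h2
      have hy := hexit ((t⁻¹ : (ZMod n)ˣ) * (e : ZMod n)) ?_ ?_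
      · rw [← hy, Units.mul_inv_cancel_left]
      · rw [← not_le, ← htq, Units.mul_inv_cancel_left, not_le]
        exact hout e h1 h2
      · rw [← htq, mul_sub, Units.mul_inv_cancel_left, mul_one, ht, ← Nat.cast_sub (by omega),
          dist0_natCast (by omega)]
        omega
    have h12 := (hpt (b + 1) (by omega) (by omega)).trans (hpt (b + 2) (by omega) (by omega)).symm
    have : Fact (1 < n) := ⟨by omega⟩
    push_cast at h12
    have : (1 : ZMod n) = 0 := by linear_combination -h12
    exact one_ne_zero this
  · -- only `n = 6`, `q = 2` remains, and `2` is no unit modulo `6`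
    have hn6 : n = 6 := by omega
    have hq2 : q = 2 := by omega
    subst hn6
    subst hq2
    have h1 := t.mul_inv
    rw [ht] at h1
    generalize ((t⁻¹ : (ZMod 6)ˣ) : ZMod 6) = v at h1
    revert v
    decide

theorem eq_one_or_neg_one_of_le_four {n : ℕ} (hn : 2 ≤ n) (h4 : n ≤ 4) (s : (ZMod n)ˣ) :
    s = 1 ∨ s = -1 := by
  interval_cases n <;> revert s <;> decide

/-- For `k ≥ 3` the quasi-Honda property forces `ρ ≡ ±1` modulo `k` and modulo `m`. The larger of
the two moduli is treated through an invariant interval, and the other one by comparing two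
neighbouring fractions. For `m = 2` the modulus `k` is treated with the `U(2)/{±1}` test. -/
theorem eq_pm_one_of_honda {k m : ℕ} (hk : 3 ≤ k) (hm : 2 ≤ m) {n : ℕ} {r : (ZMod n)ˣ}
    (h : ∀ (G : Type u) [Group G], IsQuasiHondaWith k m n r G)
    {ρ : ℕ} (hρ : (ρ : ZMod n) = r) (s : (ZMod k)ˣ) (t : (ZMod m)ˣ)
    (hs : (s : ZMod k) = ρ) (ht : (t : ZMod m) = ρ) : (s = 1 ∨ s = -1) ∧ (t = 1 ∨ t = -1) := by
  have : NeZero k := ⟨by omega⟩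
  have : NeZero m := ⟨by omega⟩
  have : Fact (1 < m) := ⟨by omega⟩
  have : Fact (1 < k) := ⟨by omega⟩
  rcases (show m = 2 ∨ 3 ≤ m by omega) with rfl | hm3
  · refine ⟨?_, eq_one_or_neg_one_of_le_four le_rfl (by norm_num) t⟩
    rcases (show k ≤ 4 ∨ 5 ≤ k by omega) with hk4 | hk5
    · exact eq_one_or_neg_one_of_le_four (by omega) hk4 s
    have hodd : Odd ρ := by
      rw [← ZMod.natCast_ne_zero_iff_odd, ← ht]
      exact t.ne_zero
    have hP := fun a (ha : k ≤ 4 * dist0 a) => dist0_test_two h hρ hodd a ha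
    rw [← hs] at hP
    have hP' := inv_invariant s _ hP
    refine eq_one_or_neg_one_of_interval (b := (k - 1) / 4) (by omega) (by omega) s fun x => ?_
    have h1 := hP x
    have h2 := hP' x
    omega
  have key := fun a c => dist0_test h hρ (a : ZMod k) (c : ZMod m)
  simp only [← hs, ← ht] at key
  rcases le_or_gt k m with hkm | hkm
  · have htt : t = 1 ∨ t = -1 := by
      have hb : 1 ≤ m / k := Nat.div_pos hkm (by omega)
      have hP : ∀ c : ZMod m, dist0 c ≤ m / k → dist0 ((t : ZMod m) * c) ≤ m / k := by
        intro c hc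
        rcases Nat.eq_zero_or_pos (dist0 c) with h0 | h0
        · rw [dist0_eq_zero.1 h0, mul_zero, dist0_eq_zero.2 rfl]; omega
        rw [Nat.le_div_iff_mul_le (by omega)] at hc ⊢
        have hu : 1 ≤ dist0 ((s⁻¹ : (ZMod k)ˣ) : ZMod k) :=
          Nat.one_le_iff_ne_zero.2 fun h0 => (s⁻¹).ne_zero (dist0_eq_zero.1 h0)
        -- pairing `c` with the class that `s` sends to `1`
        have := key ((s⁻¹ : (ZMod k)ˣ) : ZMod k) c h0 (by nlinarith) (by nlinarith)
        rwa [Units.mul_inv, dist0_one (by omega), one_mul] at this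
      have hP' := inv_invariant t _ hP
      refine eq_one_or_neg_one_of_interval hb ?_ t fun x => ⟨hP' x, hP x⟩
      calc 3 * (m / k) ≤ k * (m / k) := Nat.mul_le_mul_right _ hk
        _ ≤ m := Nat.mul_div_le m k
    refine ⟨?_, htt⟩
    rcases (show k ≤ 4 ∨ 5 ≤ k by omega) with hk4 | hk5
    · exact eq_one_or_neg_one_of_le_four (by omega) hk4 s
    -- `i` is the least integer with `i / m > 1 / k`
    set i := m / k + 1 with hi
    have hi1 : i * k ≤ m + k := by rw [hi, add_mul, one_mul]; have := Nat.div_mul_le_self m k; omega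
    have hi2 : m < i * k := by rw [hi, mul_comm]; exact Nat.lt_mul_div_succ m (by omega)
    have hi3 : 2 * i < m := by nlinarith
    have hi0 : 0 < i := Nat.succ_pos _
    have hdi : dist0 (i : ZMod m) = i := dist0_natCast (by omega)
    have hle : dist0 ((s⁻¹ : (ZMod k)ˣ) : ZMod k) ≤ 1 := by
      by_contra hgt
      have h1 := key ((s⁻¹ : (ZMod k)ˣ) : ZMod k) i (by rw [hdi]; exact hi0)
        (by rw [hdi]; exact hi3)
        (by rw [hdi]; nlinarith)
      have h2 : dist0 ((t : ZMod m) * (i : ZMod m)) = i := by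
        rcases htt with rfl | rfl
        · simpa using hdi
        · simpa [dist0_neg] using hdi
      rw [Units.mul_inv, dist0_one (by omega), h2] at h1
      omega
    rcases eq_one_or_neg_one_of_dist0_le (by omega) _ hle with h' | h'
    · left; simpa using h'
    · right; rw [inv_eq_iff_eq_inv] at h'; simpa using h'
  · have h1m : dist0 (1 : ZMod m) = 1 := dist0_one hm
    have hss : s = 1 ∨ s = -1 := by
      have hb : 1 ≤ (k - 1) / m := Nat.div_pos (by omega) (by omega)
      have hP : ∀ a : ZMod k, k ≤ dist0 a * m → k ≤ dist0 ((s : ZMod k) * a) * m := by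
        intro a ha
        have hu : 1 ≤ dist0 (t : ZMod m) :=
          Nat.one_le_iff_ne_zero.2 fun h0 => t.ne_zero (dist0_eq_zero.1 h0)
        have := key a 1 (by omega) (by omega) (by rw [h1m]; omega)
        rw [mul_one] at this
        nlinarith
      have hP' := inv_invariant s _ hP
      refine eq_one_or_neg_one_of_interval hb ?_ s fun x => ?_
      · calc 3 * ((k - 1) / m) ≤ m * ((k - 1) / m) := Nat.mul_le_mul_right _ hm3
          _ ≤ k := (Nat.mul_div_le _ m).trans (by omega)
      · have h1 := hP x
        have h2 := hP' x
        rw [Nat.le_div_iff_mul_le (by omega), Nat.le_div_iff_mul_le (by omega)]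
        omega
    refine ⟨hss, eq_one_or_neg_one_of_dist0_le hm t ?_⟩
    -- `j` is the least integer with `j / k ≥ 1 / m`
    set j := (k - 1) / m + 1 with hj
    have hj1 : j * m < k + m := by
      rw [hj, add_mul, one_mul]; have := Nat.div_mul_le_self (k - 1) m; omega
    have hj2 : k ≤ j * m := by
      have := Nat.lt_mul_div_succ (k - 1) (show 0 < m by omega)
      rw [hj, mul_comm]; omega
    have hj3 : 2 * j ≤ k := by nlinarith
    have hdj : dist0 (j : ZMod k) = j := dist0_natCast hj3
    have h1 := key j 1 (by omega) (by omega) (by rw [h1m, hdj]; omega)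
    have h2 : dist0 ((s : ZMod k) * (j : ZMod k)) = j := by
      rcases hss with rfl | rfl
      · simpa using hdj
      · simpa [dist0_neg] using hdj
    rw [h2, mul_one] at h1
    nlinarith

/-! ### The quasi-Burnside side -/

theorem zpow_eq_of_dvd {G : Type*} [Group G] {x : G} {k : ℕ} (hx : x ^ k = 1) {a b : ℤ}
    (h : (k : ℤ) ∣ a - b) : x ^ a = x ^ b := by
  obtain ⟨q, hq⟩ := h
  rw [show a = k * q + b by linarith, zpow_add, zpow_mul, zpow_natCast, hx, one_zpow, one_mul]

theorem lcm_dvd_sub {k m : ℕ} {ρ σ : ℤ}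
    (h : (ρ : ZMod (Nat.lcm k m)) = (σ : ZMod (Nat.lcm k m))) :
    (k : ℤ) ∣ ρ - σ ∧ (m : ℤ) ∣ ρ - σ := by
  have h' := (ZMod.intCast_eq_intCast_iff_dvd_sub _ _ _).1 h.symm
  exact ⟨(Int.natCast_dvd_natCast.2 (Nat.dvd_lcm_left k m)).trans h',
    (Int.natCast_dvd_natCast.2 (Nat.dvd_lcm_right k m)).trans h'⟩

theorem quasiBurnside_one (k m : ℕ) (G : Type*) [Group G] :
    IsQuasiBurnsideWith k k m (Nat.lcm k m) 1 G := by
  intro ρ hρ x y z hxy hx hy hz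
  obtain ⟨h1, h2⟩ := lcm_dvd_sub (σ := 1) (by simpa using hρ)
  rw [zpow_eq_of_dvd hx h1, zpow_eq_of_dvd hy h1, zpow_eq_of_dvd hz h2, zpow_one, zpow_one,
    zpow_one]
  exact ⟨x, y, z, hxy, IsConj.refl _, IsConj.refl _, IsConj.refl _⟩

theorem quasiBurnside_neg_one (k m : ℕ) (G : Type*) [Group G] :
    IsQuasiBurnsideWith k k m (Nat.lcm k m) (-1) G := by
  intro ρ hρ x y z hxy hx hy hz
  obtain ⟨h1, h2⟩ := lcm_dvd_sub (σ := -1) (by simpa using hρ)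
  rw [zpow_eq_of_dvd hx h1, zpow_eq_of_dvd hy h1, zpow_eq_of_dvd hz h2, zpow_neg_one, zpow_neg_one,
    zpow_neg_one]
  refine ⟨x⁻¹, y⁻¹, x⁻¹ * y⁻¹, rfl, IsConj.refl _, IsConj.refl _, isConj_iff.2 ⟨y, ?_⟩⟩
  rw [← hxy]; group

/-- In a dihedral group, `(xy)^(2t+1)` is the product of `y` and a conjugate of `x`. -/
theorem quasiBurnside_two (m : ℕ) (r : (ZMod (Nat.lcm 2 m))ˣ) (G : Type*) [Group G] :
    IsQuasiBurnsideWith 2 2 m (Nat.lcm 2 m) r G := by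
  intro ρ hρ x y z hxy hx hy hz
  have hodd : Odd ρ := by
    have hu : IsUnit (ZMod.castHom (Nat.dvd_lcm_left 2 m) (ZMod 2) (ρ : ZMod (Nat.lcm 2 m))) := by
      rw [hρ]; exact r.isUnit.map _
    rw [map_intCast] at hu
    rw [← Int.not_even_iff_odd, ← ZMod.intCast_eq_zero_iff_even]
    exact hu.ne_zero
  obtain ⟨t, rfl⟩ := hodd
  have hx1 : x ^ (2 * t + 1) = x := by
    rw [zpow_add, zpow_mul, zpow_ofNat, hx, one_zpow, one_mul, zpow_one]
  have hy1 : y ^ (2 * t + 1) = y := by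
    rw [zpow_add, zpow_mul, zpow_ofNat, hy, one_zpow, one_mul, zpow_one]
  have hxi : x⁻¹ = x := by rw [inv_eq_iff_mul_eq_one, ← sq, hx]
  have hyi : y⁻¹ = y := by rw [inv_eq_iff_mul_eq_one, ← sq, hy]
  have hinv : y * z ^ t * y⁻¹ = z ^ (-t) := by
    rw [← conj_zpow, zpow_neg, ← inv_zpow, ← hxy, mul_inv_rev, hxi, hyi]
    congr 1
    rw [mul_assoc, mul_assoc, ← sq, hy, mul_one]
  rw [hx1, hy1]
  refine ⟨z ^ t * x * (z ^ t)⁻¹, y, z ^ (2 * t + 1), ?_, isConj_iff.2 ⟨z ^ t, rfl⟩,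
    IsConj.refl _, IsConj.refl _⟩
  calc z ^ t * x * (z ^ t)⁻¹ * y = z ^ t * x * z ^ (-t) * y := by rw [zpow_neg]
    _ = z ^ t * (x * y) * z ^ t := by rw [← hinv]; group
    _ = z ^ (2 * t + 1) := by rw [hxy]; group

theorem honda_of_conj {G : Type*} [Group G] {a b x' y' z' : G} (h : x' * y' = z')
    (hx : IsConj a x') (hy : IsConj a⁻¹ y') (hz : IsConj b z') :
    ∃ w : G, IsConj (a * w * a⁻¹ * w⁻¹) b := by
  obtain ⟨p, rfl⟩ := isConj_iff.1 hx
  obtain ⟨q, rfl⟩ := isConj_iff.1 hy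
  refine ⟨p⁻¹ * q, IsConj.trans (isConj_iff.2 ⟨p, ?_⟩) hz.symm⟩
  rw [← h]; group

/-- A commutator `[x, u]` is the product of `x` and the conjugate `u x⁻¹ u⁻¹` of `x⁻¹`. -/
theorem honda_of_burnside {k m n : ℕ} {r : (ZMod n)ˣ} {G : Type*} [Group G]
    (h : IsQuasiBurnsideWith k k m n r G) : IsQuasiHondaWith k m n r G := by
  intro ρ hρ x u z hz hx hzm
  obtain ⟨x', y', z', h1, h2, h3, h4⟩ := h ρ hρ x (u * x⁻¹ * u⁻¹) z
    (by rw [← hz]; group) hx (by rw [conj_pow, inv_pow, hx]; group) hzm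
  refine honda_of_conj h1 h2 (IsConj.trans (isConj_iff.2 ⟨u, ?_⟩) h3) h4
  rw [conj_zpow, inv_zpow]

/-- Passing from `r` to `r*` replaces `z ^ ρ` by its inverse, and the inverse of `[a, w]` is
conjugate to a commutator `[a, w']`. -/
theorem honda_of_burnside_star {k m : ℕ} {r s : (ZMod (Nat.lcm k m))ˣ} {G : Type*} [Group G]
    (h : IsQuasiBurnsideWith k k m (Nat.lcm k m) s G)
    (hk : ZMod.castHom (Nat.dvd_lcm_left k m) (ZMod k) (s : ZMod (Nat.lcm k m)) =
      ZMod.castHom (Nat.dvd_lcm_left k m) (ZMod k) (r : ZMod (Nat.lcm k m)))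
    (hm : ZMod.castHom (Nat.dvd_lcm_right k m) (ZMod m) (s : ZMod (Nat.lcm k m)) =
      - ZMod.castHom (Nat.dvd_lcm_right k m) (ZMod m) (r : ZMod (Nat.lcm k m))) :
    IsQuasiHondaWith k m (Nat.lcm k m) r G := by
  intro ρ hρ x u z hz hx hzm
  obtain ⟨σ, hσ⟩ := ZMod.intCast_surjective (s : ZMod (Nat.lcm k m))
  obtain ⟨w, hw⟩ := honda_of_burnside h σ hσ x u z hz hx hzm
  have hdk : (k : ℤ) ∣ σ - ρ := by
    rw [← ZMod.intCast_eq_intCast_iff_dvd_sub]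
    rw [← hσ, ← hρ, map_intCast, map_intCast] at hk
    exact hk.symm
  have hdm : (m : ℤ) ∣ σ - -ρ := by
    rw [← ZMod.intCast_eq_intCast_iff_dvd_sub, Int.cast_neg]
    rw [← hσ, ← hρ, map_intCast, map_intCast] at hm
    exact hm.symm
  rw [zpow_eq_of_dvd hx hdk, zpow_eq_of_dvd hzm hdm, zpow_neg] at hw
  obtain ⟨c, hc⟩ := isConj_iff.1 hw
  -- `[a, w]⁻¹` is conjugate to `[a, w⁻¹]`
  refine ⟨w⁻¹, isConj_iff.2 ⟨c * w, ?_⟩⟩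
  rw [← inv_inv (z ^ ρ), ← hc]; group

theorem eq_or_star_of_honda {k m : ℕ} (hk : 3 ≤ k) (hm : 2 ≤ m) (r : (ZMod (Nat.lcm k m))ˣ)
    (h : ∀ (G : Type u) [Group G], IsQuasiHondaWith k m (Nat.lcm k m) r G) :
    r = 1 ∨ r = -1 ∨ (Nat.gcd k m ≤ 2 ∧ ∃ s : (ZMod (Nat.lcm k m))ˣ, (s = 1 ∨ s = -1) ∧
      ZMod.castHom (Nat.dvd_lcm_left k m) (ZMod k) (s : ZMod (Nat.lcm k m)) =
        ZMod.castHom (Nat.dvd_lcm_left k m) (ZMod k) (r : ZMod (Nat.lcm k m)) ∧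
      ZMod.castHom (Nat.dvd_lcm_right k m) (ZMod m) (s : ZMod (Nat.lcm k m)) =
        - ZMod.castHom (Nat.dvd_lcm_right k m) (ZMod m) (r : ZMod (Nat.lcm k m))) := by
  have : NeZero (Nat.lcm k m) := ⟨Nat.lcm_ne_zero (by omega) (by omega)⟩
  obtain ⟨ρ, hρ⟩ := ZMod.natCast_zmod_surjective (r : ZMod (Nat.lcm k m))
  have hsρ : ((Units.map (ZMod.castHom (Nat.dvd_lcm_left k m) (ZMod k)).toMonoidHom r : (ZMod k)ˣ)
      : ZMod k) = ρ := by
    simp [← hρ]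
  have htρ : ((Units.map (ZMod.castHom (Nat.dvd_lcm_right k m) (ZMod m)).toMonoidHom r : (ZMod m)ˣ)
      : ZMod m) = ρ := by
    simp [← hρ]
  obtain ⟨hs, ht⟩ := eq_pm_one_of_honda hk hm h hρ _ _ hsρ htρ
  rw [Units.ext_iff, Units.ext_iff, hsρ, Units.val_neg, Units.val_one] at hs
  rw [Units.ext_iff, Units.ext_iff, htρ, Units.val_neg, Units.val_one] at ht
  -- congruences modulo `k` and `m` combine modulo the lcm
  have hlcm : ∀ σ : ℤ, (ρ : ZMod k) = σ → (ρ : ZMod m) = σ → (r : ZMod (Nat.lcm k m)) = σ := by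
    intro σ h1 h2
    rw [← Int.cast_natCast, ZMod.intCast_eq_intCast_iff_dvd_sub] at h1 h2
    rw [← hρ, ← Int.cast_natCast, ZMod.intCast_eq_intCast_iff_dvd_sub]
    rw [Int.natCast_dvd] at h1 h2 ⊢
    exact Nat.lcm_dvd h1 h2
  -- opposite signs modulo `k` and `m` force `1 = -1` modulo the gcd
  have hgcd : ∀ σ : ℤ, (σ = 1 ∨ σ = -1) → (ρ : ZMod k) = σ → (ρ : ZMod m) = -σ →
      Nat.gcd k m ≤ 2 := by
    intro σ hσ h1 h2
    rw [← Int.cast_neg] at h2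
    rw [← Int.cast_natCast, ZMod.intCast_eq_intCast_iff_dvd_sub] at h1 h2
    have d1 := (Int.natCast_dvd_natCast.2 (Nat.gcd_dvd_left k m)).trans h1
    have d2 := (Int.natCast_dvd_natCast.2 (Nat.gcd_dvd_right k m)).trans h2
    have d3 := dvd_sub d1 d2
    have : (Nat.gcd k m : ℤ) ∣ 2 := by
      rcases hσ with rfl | rfl
      · rwa [show (1 - (ρ : ℤ)) - (-1 - ρ) = 2 by ring] at d3
      · rwa [show (-1 - (ρ : ℤ)) - (- -1 - ρ) = -2 by ring, dvd_neg] at d3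
    exact Nat.le_of_dvd (by norm_num) (by exact_mod_cast this)
  rcases hs with hs | hs <;> rcases ht with ht | ht
  · left; ext; simpa using hlcm 1 (by simpa using hs) (by simpa using ht)
  · right; right
    refine ⟨hgcd 1 (.inl rfl) (by simpa using hs) (by simpa using ht), 1, .inl rfl, ?_, ?_⟩
    · simp only [Units.val_one, map_one, ← hρ, map_natCast, hs]
    · simp only [Units.val_one, map_one, ← hρ, map_natCast, ht, neg_neg]
  · right; right
    refine ⟨hgcd (-1) (.inr rfl) (by simpa using hs) (by simpa using ht), -1, .inr rfl, ?_, ?_⟩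
    · simp only [Units.val_neg, Units.val_one, map_neg, map_one, ← hρ, map_natCast, hs]
    · simp only [Units.val_neg, Units.val_one, map_neg, map_one, ← hρ, map_natCast, ht]
  · right; left; ext; simpa using hlcm (-1) (by simpa using hs) (by simpa using ht)

end QuasiHonda

theorem every_group_quasiHonda_iff_quasiBurnside (k m : ℕ) (hk : 2 ≤ k) (hm : 2 ≤ m)
    (r : (ZMod (Nat.lcm k m))ˣ) :
    (∀ (G : Type u) [Group G], IsQuasiHondaWith k m (Nat.lcm k m) r G) ↔
      ((∀ (G : Type u) [Group G], IsQuasiBurnsideWith k k m (Nat.lcm k m) r G) ∨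
        (Nat.gcd k m ≤ 2 ∧
          ∃ rstar : (ZMod (Nat.lcm k m))ˣ,
            ZMod.castHom (Nat.dvd_lcm_left k m) (ZMod k) (rstar : ZMod (Nat.lcm k m)) =
              ZMod.castHom (Nat.dvd_lcm_left k m) (ZMod k) (r : ZMod (Nat.lcm k m)) ∧
            ZMod.castHom (Nat.dvd_lcm_right k m) (ZMod m) (rstar : ZMod (Nat.lcm k m)) =
              - ZMod.castHom (Nat.dvd_lcm_right k m) (ZMod m) (r : ZMod (Nat.lcm k m)) ∧
            (∀ (G : Type u) [Group G], IsQuasiBurnsideWith k k m (Nat.lcm k m) rstar G))) := by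
  constructor
  · intro h
    rcases (show k = 2 ∨ 3 ≤ k by omega) with rfl | hk3
    · exact .inl fun G _ => QuasiHonda.quasiBurnside_two m r G
    · rcases QuasiHonda.eq_or_star_of_honda hk3 hm r h with rfl | rfl | ⟨hg, s, hs, h1, h2⟩
      · exact .inl fun G _ => QuasiHonda.quasiBurnside_one k m G
      · exact .inl fun G _ => QuasiHonda.quasiBurnside_neg_one k m G
      · refine .inr ⟨hg, s, h1, h2, fun G _ => ?_⟩
        rcases hs with rfl | rfl
        · exact QuasiHonda.quasiBurnside_one k m G
        · exact QuasiHonda.quasiBurnside_neg_one k m G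
  · rintro (h | ⟨-, s, h1, h2, h⟩) G _
    · exact QuasiHonda.honda_of_burnside (h G)
    · exact QuasiHonda.honda_of_burnside_star (h G) h1 h2
end

section
/- Let G be a group, let x, y, z ∈ G, and let r be an integer. Suppose at least one of x, y, z has infinite order. If xy = z, the subgroup generated by x equals the subgroup generated by x^r, the subgroup generated by y equals the subgroup generated by y^r, and the subgroup generated by z equals the subgroup generated by z^r, then there exist x', y', z' ∈ G such that x'y' = z', x' is conjugate to x^r, y' is conjugate to y^r, and z' is conjugate to z^r. -/
/-!
A generator `g ^ r` of an infinite cyclic group `⟨g⟩` must have `r = 1` or `r = -1`. For `r = 1` the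
triple `(x, y, z)` works. For `r = -1` take `x⁻¹`, `y⁻¹` and their product `x⁻¹ * y⁻¹`, which is
conjugate to `y⁻¹ * x⁻¹ = z⁻¹`.
-/

theorem exponent_of_zpowers_eq {G : Type*} [Group G] {g : G} {r : ℤ} (hg : ¬ IsOfFinOrder g)
    (h : Subgroup.zpowers g = Subgroup.zpowers (g ^ r)) : r = 1 ∨ r = -1 := by
  have hmem : g ∈ Subgroup.zpowers (g ^ r) := h ▸ Subgroup.mem_zpowers g
  obtain ⟨k, hk⟩ := Subgroup.mem_zpowers_iff.mp hmem
  have hrk : r * k = 1 := by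
    apply injective_zpow_iff_not_isOfFinOrder.mpr hg
    simpa [zpow_mul] using hk
  exact Int.eq_one_or_neg_one_of_mul_eq_one hrk

theorem product_power_of_infinite_order {G : Type*} [Group G] (x y z : G) (r : ℤ)
    (hord : ¬ IsOfFinOrder x ∨ ¬ IsOfFinOrder y ∨ ¬ IsOfFinOrder z)
    (hxy : x * y = z)
    (hx : Subgroup.zpowers x = Subgroup.zpowers (x ^ r))
    (hy : Subgroup.zpowers y = Subgroup.zpowers (y ^ r))
    (hz : Subgroup.zpowers z = Subgroup.zpowers (z ^ r)) :
    ∃ x' y' z' : G, x' * y' = z' ∧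
      IsConj (x ^ r) x' ∧ IsConj (y ^ r) y' ∧ IsConj (z ^ r) z' := by
  have hr : r = 1 ∨ r = -1 := by
    rcases hord with h | h | h
    · exact exponent_of_zpowers_eq h hx
    · exact exponent_of_zpowers_eq h hy
    · exact exponent_of_zpowers_eq h hz
  refine ⟨x ^ r, y ^ r, x ^ r * y ^ r, rfl, IsConj.refl _, IsConj.refl _, ?_⟩
  subst hxy
  rcases hr with rfl | rfl
  · simpa only [zpow_one] using IsConj.refl (x * y)
  · exact isConj_iff.mpr ⟨x⁻¹, by simp [mul_assoc]⟩
end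

section
/- Every group that is quasi-Honda and torsion (every element has finite order) is Honda. -/
/-!
Let `[x,u] = z` and `⟨z⟩ = ⟨z^r⟩`. The quasi-Honda condition would apply to `r` if also
`⟨x⟩ = ⟨x^r⟩`. Both `x` and `z` have finite order and `r` is a unit modulo the order of `z`, so,
since reduction `(ℤ/mn)ˣ → (ℤ/m)ˣ` is surjective, `r` can be replaced by an integer `t`, congruent
to `r` modulo the order of `z`, which is invertible modulo the orders of both `x` and `z`
(`exists_congr_invertible`). Then `z^t = z^r`, the quasi-Honda condition applies to `t`, and a
conjugate of a commutator is a commutator.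
-/

/-- A group `G` is quasi-Honda if for every integer `r` and all `x, u, z ∈ G` with
`[x,u] = z`, `⟨x⟩ = ⟨x^r⟩` and `⟨z⟩ = ⟨z^r⟩`, there exists `w` with `[x^r, w] ~ z^r`. -/
def IsQuasiHonda (G : Type*) [Group G] : Prop :=
  ∀ (r : ℤ) (x u z : G), x * u * x⁻¹ * u⁻¹ = z →
    Subgroup.zpowers x = Subgroup.zpowers (x ^ r) →
    Subgroup.zpowers z = Subgroup.zpowers (z ^ r) →
      ∃ w : G, IsConj (x ^ r * w * (x ^ r)⁻¹ * w⁻¹) (z ^ r)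

/-- A group `G` is Honda if for every integer `r` and all `x, u, z ∈ G` with
`[x,u] = z` and `⟨z⟩ = ⟨z^r⟩`, there exist `v, w` with `[v,w] = z^r`. -/
def IsHonda (G : Type*) [Group G] : Prop :=
  ∀ (r : ℤ) (x u z : G), x * u * x⁻¹ * u⁻¹ = z →
    Subgroup.zpowers z = Subgroup.zpowers (z ^ r) →
      ∃ v w : G, v * w * v⁻¹ * w⁻¹ = z ^ r

/-- A unit modulo `m` lifts to an integer invertible modulo `m * n`. -/
lemma exists_congr_invertible {m n : ℕ} (hm : m ≠ 0) (hn : n ≠ 0) {r k : ℤ}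
    (h : (m : ℤ) ∣ r * k - 1) :
    ∃ t s : ℤ, (m : ℤ) ∣ t - r ∧ ((m * n : ℕ) : ℤ) ∣ t * s - 1 := by
  have : NeZero (m * n) := ⟨mul_ne_zero hm hn⟩
  have hrk : (r : ZMod m) * k = 1 := by
    have := (ZMod.intCast_zmod_eq_zero_iff_dvd (r * k - 1) m).2 h
    push_cast at this
    exact sub_eq_zero.1 this
  obtain ⟨U, hU⟩ := ZMod.unitsMap_surjective (Dvd.intro n rfl : m ∣ m * n)
    (Units.mkOfMulEqOne _ _ hrk)
  refine ⟨(U : ZMod (m * n)).val, ((U⁻¹ : (ZMod (m * n))ˣ) : ZMod (m * n)).val, ?_, ?_⟩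
  · rw [← ZMod.intCast_zmod_eq_zero_iff_dvd]
    have h1 := congrArg Units.val hU
    rw [ZMod.unitsMap_val] at h1
    push_cast
    rw [ZMod.natCast_val, h1]
    simp
  · rw [← ZMod.intCast_zmod_eq_zero_iff_dvd]
    push_cast [ZMod.natCast_zmod_val]
    simp

lemma zpow_eq_of_orderOf_dvd_sub {G : Type*} [Group G] {g : G} {a b : ℤ}
    (h : (orderOf g : ℤ) ∣ a - b) : g ^ a = g ^ b := by
  rw [← mul_inv_eq_one, ← zpow_sub]
  exact orderOf_dvd_iff_zpow_eq_one.1 h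

lemma zpowers_eq_zpowers_zpow {G : Type*} [Group G] {g : G} {t s : ℤ}
    (h : (orderOf g : ℤ) ∣ t * s - 1) :
    Subgroup.zpowers g = Subgroup.zpowers (g ^ t) := by
  refine le_antisymm ?_ ?_
  · rw [Subgroup.zpowers_le, Subgroup.mem_zpowers_iff]
    exact ⟨s, by rw [← zpow_mul, zpow_eq_of_orderOf_dvd_sub h, zpow_one]⟩
  · rw [Subgroup.zpowers_le]
    exact Subgroup.zpow_mem_zpowers g t

theorem isHonda_of_isQuasiHonda_of_torsion (G : Type*) [Group G]
    (hQH : IsQuasiHonda G) (htor : ∀ g : G, IsOfFinOrder g) : IsHonda G := by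
  intro r x u z hz hr
  obtain ⟨k, hk⟩ := Subgroup.mem_zpowers_iff.1 (hr ▸ Subgroup.mem_zpowers z)
  have hrk : (orderOf z : ℤ) ∣ r * k - 1 := by
    rw [orderOf_dvd_iff_zpow_eq_one, zpow_sub, zpow_mul, hk, zpow_one, mul_inv_cancel]
  obtain ⟨t, s, htr, hts⟩ := exists_congr_invertible (htor z).orderOf_pos.ne'
    (htor x).orderOf_pos.ne' hrk
  push_cast at hts
  obtain ⟨w, hw⟩ := hQH t x u z hz
    (zpowers_eq_zpowers_zpow ((Dvd.intro_left _ rfl).trans hts))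
    (zpowers_eq_zpowers_zpow ((Dvd.intro _ rfl).trans hts))
  obtain ⟨c, hc⟩ := isConj_iff.1 hw
  refine ⟨c * x ^ t * c⁻¹, c * w * c⁻¹, ?_⟩
  rw [← zpow_eq_of_orderOf_dvd_sub htr, ← hc]
  group
end

section
/- Let k, m ≥ 2 be integers and let r be a unit in ℤ/lcm(k,m)ℤ. If a group G is (k,k,m,r)-quasi-Burnside, then G is (k,m,r)-quasi-Honda. -/
theorem quasiHonda_of_quasiBurnside (k m : ℕ) (hk : 2 ≤ k) (hm : 2 ≤ m)
    (r : (ZMod (Nat.lcm k m))ˣ) (G : Type*) [Group G]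
    (hQB : IsQuasiBurnsideWith k k m (Nat.lcm k m) r G) :
    IsQuasiHondaWith k m (Nat.lcm k m) r G := by
  intro ρ hρ x u z hz hx hzm
  -- A commutator is the product of `x` and a conjugate of `x⁻¹`.
  obtain ⟨x', y', z', hmul, hx', hy', hz'⟩ :=
    hQB ρ hρ x (u * x⁻¹ * u⁻¹) z (by rw [← hz]; group) hx
      (by rw [conj_pow, inv_pow, hx]; group) hzm
  obtain ⟨a, rfl⟩ := isConj_iff.mp hx'
  obtain ⟨b, rfl⟩ := isConj_iff.mp hy'
  -- With `w = a⁻¹ b u`, the commutator `[x ^ ρ, w]` is the conjugate of `z'` by `a⁻¹`.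
  refine ⟨a⁻¹ * b * u, IsConj.trans (isConj_iff.mpr ⟨a, ?_⟩) hz'.symm⟩
  rw [← hmul, conj_zpow, inv_zpow]
  group
end

section
/- Every finite group is quasi-Burnside, quasi-Honda, and Honda. -/
/-!
All three properties reduce to one statement (`exists_conj_pow_mul`): if `x * y = z` and `p` is a
prime larger than `|G|`, then `z ^ p` is the product of a conjugate of `x ^ p` and a conjugate of
`y ^ p`. Dirichlet's theorem supplies such a `p` congruent to `r` modulo the relevant element orders.

The proof works in the centre of the group algebra `𝔽_p[G]` rather than with complex characters.
A central element is modelled by its matrix `M` on the regular representation, so that `M 1 g` is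
its coefficient at `g`. With `R_g` the matrix of right multiplication by `g⁻¹`, the trace of
`M * R_g` is `|G| * M 1 g`. Since `trace (A ^ p) = (trace A) ^ p = trace A` over `𝔽_p`, taking `A = M * R_g`
gives `(M ^ p) 1 (g ^ p) = M 1 g` (`BiInvariant.pow_apply_pow`): the Frobenius map on the centre
just moves coefficients along `g ↦ g ^ p`.
If `K` and `L` are the class sums of `x` and `y`, the coefficient of `K * L` at `z` is a positive
integer at most `|G| < p`, so it is nonzero in `𝔽_p`; hence so is the coefficient of
`(K * L) ^ p = K ^ p * L ^ p` at `z ^ p`, and `K ^ p`, `L ^ p` are supported on the classes of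
`x ^ p` and `y ^ p`.
-/

/-- A group `G` is quasi-Burnside if for every integer `r` and all `x, y, z ∈ G` with
`x * y = z`, `⟨x⟩ = ⟨x^r⟩`, `⟨y⟩ = ⟨y^r⟩` and `⟨z⟩ = ⟨z^r⟩`, there exist `x', y', z'`
with `x' * y' = z'`, `x' ~ x^r`, `y' ~ y^r`, `z' ~ z^r`. -/
def IsQuasiBurnside (G : Type*) [Group G] : Prop :=
  ∀ (r : ℤ) (x y z : G), x * y = z →
    Subgroup.zpowers x = Subgroup.zpowers (x ^ r) →
    Subgroup.zpowers y = Subgroup.zpowers (y ^ r) →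
    Subgroup.zpowers z = Subgroup.zpowers (z ^ r) →
      ∃ x' y' z' : G, x' * y' = z' ∧
        IsConj (x ^ r) x' ∧ IsConj (y ^ r) y' ∧ IsConj (z ^ r) z'

/-- A matrix indexed by a group that is invariant under left and right translations: the matrix, on
the regular representation, of a central element `a` of the group algebra. Matrices act on row
vectors: the row at `s` lists the coefficients of `s * a`, so the row at `1` lists those of `a`. -/
structure BiInvariant {G R : Type*} [Group G] (M : Matrix G G R) : Prop where
  left : ∀ g s t, M (g * s) (g * t) = M s t
  right : ∀ g s t, M (s * g) (t * g) = M s t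

/-- The matrix of right multiplication by `g⁻¹` on the group algebra `R[G]`, acting on row vectors. -/
def rightMatrix (R : Type*) [Semiring R] {G : Type*} [Group G] [DecidableEq G] (g : G) :
    Matrix G G R :=
  Matrix.of fun s t => if s = t * g then 1 else 0

open scoped Classical in
/-- The matrix of the class sum of `x`, that is of the sum of all conjugates of `x`. -/
noncomputable def classMatrix (R : Type*) [Semiring R] {G : Type*} [Group G] (x : G) :
    Matrix G G R :=
  Matrix.of fun s t => if IsConj x (s⁻¹ * t) then 1 else 0

section

variable {G : Type*} [Group G] [Fintype G] {R : Type*} [CommRing R]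

theorem BiInvariant.mul {M N : Matrix G G R} (hM : BiInvariant M) (hN : BiInvariant N) :
    BiInvariant (M * N) where
  left g s t := by
    simp only [Matrix.mul_apply]
    rw [← Equiv.sum_comp (Equiv.mulLeft g)]
    simp [hM.left, hN.left]
  right g s t := by
    simp only [Matrix.mul_apply]
    rw [← Equiv.sum_comp (Equiv.mulRight g)]
    simp [hM.right, hN.right]

variable [DecidableEq G]

theorem BiInvariant.pow {M : Matrix G G R} (hM : BiInvariant M) (n : ℕ) :
    BiInvariant (M ^ n) := by
  induction n with
  | zero => constructor <;> intro g s t <;> simp [Matrix.one_apply]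
  | succ n ih => rw [pow_succ]; exact ih.mul hM

theorem mul_rightMatrix_apply (M : Matrix G G R) (g s t : G) :
    (M * rightMatrix R g) s t = M s (t * g) := by
  simp [Matrix.mul_apply, rightMatrix]

theorem rightMatrix_mul_apply (M : Matrix G G R) (g s t : G) :
    (rightMatrix R g * M) s t = M (s * g⁻¹) t := by
  simp [Matrix.mul_apply, rightMatrix, ← mul_inv_eq_iff_eq_mul]

theorem rightMatrix_pow (g : G) (n : ℕ) :
    rightMatrix R g ^ n = rightMatrix R (g ^ n) := by
  induction n with
  | zero => ext s t; simp [rightMatrix, Matrix.one_apply]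
  | succ n ih =>
    rw [pow_succ, ih]
    ext s t
    rw [mul_rightMatrix_apply]
    simp [rightMatrix, pow_succ', mul_assoc]

theorem BiInvariant.commute_rightMatrix {M : Matrix G G R} (hM : BiInvariant M) (g : G) :
    Commute M (rightMatrix R g) := by
  ext s t
  rw [mul_rightMatrix_apply, rightMatrix_mul_apply, ← hM.right g (s * g⁻¹) t,
    inv_mul_cancel_right]

theorem BiInvariant.trace_mul_rightMatrix {M : Matrix G G R} (hM : BiInvariant M) (g : G) :
    (M * rightMatrix R g).trace = Fintype.card G * M 1 g := by
  have h (s : G) : M s (s * g) = M 1 g := by simpa using hM.left s 1 g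
  simp [Matrix.trace, mul_rightMatrix_apply, h]

/-- The `p`-th power of a central element of `𝔽_p[G]` has at `g ^ p` the coefficient that the
element itself has at `g`, as long as `p` does not divide `|G|`. -/
theorem BiInvariant.pow_apply_pow {p : ℕ} [Fact p.Prime] (hp : (Fintype.card G : ZMod p) ≠ 0)
    {M : Matrix G G (ZMod p)} (hM : BiInvariant M) (g : G) :
    (M ^ p) 1 (g ^ p) = M 1 g := by
  have h := ZMod.trace_pow_card (M * rightMatrix (ZMod p) g)
  rw [(hM.commute_rightMatrix g).mul_pow, rightMatrix_pow, (hM.pow p).trace_mul_rightMatrix,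
    hM.trace_mul_rightMatrix, ZMod.pow_card] at h
  exact mul_left_cancel₀ hp h

end

section

variable {G : Type*} [Group G]

theorem isConj_conj_right_iff (x g h : G) : IsConj x (g * h * g⁻¹) ↔ IsConj x h := by
  have hc : IsConj h (g * h * g⁻¹) := isConj_iff.2 ⟨g, rfl⟩
  exact ⟨fun k => k.trans hc.symm, fun k => k.trans hc⟩

theorem classMatrix_congr (R : Type*) [Semiring R] {x s t s' t' : G}
    (h : IsConj x (s⁻¹ * t) ↔ IsConj x (s'⁻¹ * t')) :
    classMatrix R x s t = classMatrix R x s' t' := by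
  classical exact if_congr h rfl rfl

theorem classMatrix_biInvariant (R : Type*) [CommRing R] (x : G) :
    BiInvariant (classMatrix R x) where
  left g s t := classMatrix_congr R <| by
    rw [show (g * s)⁻¹ * (g * t) = s⁻¹ * t by group]
  right g s t := classMatrix_congr R <| by
    have h : (s * g)⁻¹ * (t * g) = g⁻¹ * (s⁻¹ * t) * g⁻¹⁻¹ := by group
    rw [h, isConj_conj_right_iff]

theorem classMatrix_commute [Fintype G] (R : Type*) [CommRing R] (x y : G) :
    Commute (classMatrix R x) (classMatrix R y) := by
  ext s t
  simp only [Matrix.mul_apply]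
  -- The substitution `v ↦ s * v⁻¹ * t` exchanges the two factors of `s⁻¹ * t`, up to conjugacy.
  rw [← Equiv.sum_comp (((Equiv.inv G).trans (Equiv.mulLeft s)).trans (Equiv.mulRight t))]
  refine Finset.sum_congr rfl fun v _ => ?_
  have h₁ : s⁻¹ * (s * v⁻¹ * t) = v⁻¹ * t := by group
  have h₂ : (s * v⁻¹ * t)⁻¹ * t = (t⁻¹ * s) * (s⁻¹ * v) * (t⁻¹ * s)⁻¹ := by group
  rw [mul_comm]
  exact congrArg₂ (· * ·)
    (classMatrix_congr R (by
      change IsConj y ((s * v⁻¹ * t)⁻¹ * t) ↔ _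
      rw [h₂, isConj_conj_right_iff]))
    (classMatrix_congr R (by
      change IsConj x (s⁻¹ * (s * v⁻¹ * t)) ↔ _
      rw [h₁]))

theorem isConj_pow {x y : G} (h : IsConj x y) (n : ℕ) : IsConj (x ^ n) (y ^ n) := by
  obtain ⟨c, rfl⟩ := isConj_iff.1 h
  exact isConj_iff.2 ⟨c, by simp⟩

/-- Products of two classes are compatible with `p`-th powers for every prime `p > |G|`. -/
theorem exists_conj_pow_mul [Finite G] {p : ℕ} (hp : p.Prime) (hcard : Nat.card G < p) (x y : G) :
    ∃ x' y' : G, x' * y' = (x * y) ^ p ∧ IsConj (x ^ p) x' ∧ IsConj (y ^ p) y' := by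
  classical
  have := Fintype.ofFinite G
  have : Fact p.Prime := ⟨hp⟩
  rw [Nat.card_eq_fintype_card] at hcard
  have hcast {n : ℕ} (h0 : 0 < n) (hn : n ≤ Fintype.card G) : (n : ZMod p) ≠ 0 := by
    rw [Ne, ZMod.natCast_eq_zero_iff]
    exact Nat.not_dvd_of_pos_of_lt h0 (hn.trans_lt hcard)
  have hG : (Fintype.card G : ZMod p) ≠ 0 := hcast Fintype.card_pos le_rfl
  let K := classMatrix (ZMod p) x
  let L := classMatrix (ZMod p) y
  have hK : BiInvariant K := classMatrix_biInvariant _ x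
  have hL : BiInvariant L := classMatrix_biInvariant _ y
  have hKL : (K * L) 1 (x * y) ≠ 0 := by
    have hsum : (K * L) 1 (x * y) =
        ((Finset.univ.filter fun v : G => IsConj x v ∧ IsConj y (v⁻¹ * (x * y))).card : ZMod p) := by
      simp [K, L, classMatrix, Matrix.mul_apply, ← ite_and, Finset.sum_boole, and_comm]
    rw [hsum]
    refine hcast (Finset.card_pos.2 ⟨x, ?_⟩) (Finset.card_le_univ _)
    simp [-isConj_iff, IsConj.refl]
  rw [← (hK.mul hL).pow_apply_pow hG, (classMatrix_commute (ZMod p) x y).mul_pow,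
    Matrix.mul_apply] at hKL
  obtain ⟨v, -, hv⟩ := Finset.exists_ne_zero_of_sum_ne_zero hKL
  have hcop : (Nat.card G).Coprime p := by
    rw [Nat.card_eq_fintype_card]
    exact (Nat.coprime_of_lt_prime Fintype.card_ne_zero hcard hp).symm
  -- As `p` is prime to `|G|`, every `w` is a `p`-th power `b ^ p`, and the coefficient at `w` of the
  -- `p`-th power of a class sum is the coefficient of that class sum at `b`.
  have key (a w : G) (h : (classMatrix (ZMod p) a ^ p) 1 w ≠ 0) : IsConj (a ^ p) w := by
    obtain ⟨b, rfl⟩ := (powCoprime hcop).surjective w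
    rw [powCoprime_apply, (classMatrix_biInvariant _ a).pow_apply_pow hG] at h
    refine isConj_pow ?_ p
    by_contra hab
    simp [-isConj_iff, classMatrix, hab] at h
  refine ⟨v, v⁻¹ * (x * y) ^ p, by simp, key x v (left_ne_zero_of_mul hv), key y _ ?_⟩
  have hinv := (hL.pow p).left v 1 (v⁻¹ * (x * y) ^ p)
  rw [mul_one, mul_inv_cancel_left] at hinv
  exact hinv ▸ right_ne_zero_of_mul hv

theorem isCoprime_orderOf [Finite G] {x : G} {r : ℤ}
    (h : Subgroup.zpowers x = Subgroup.zpowers (x ^ r)) : IsCoprime r (orderOf x : ℤ) := by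
  obtain ⟨k, hk⟩ : x ∈ Subgroup.zpowers (x ^ r) := h ▸ Subgroup.mem_zpowers x
  have hk' : x ^ (r * k) = x ^ (1 : ℤ) := by simpa [zpow_mul] using hk
  obtain ⟨m, hm⟩ := (zpow_eq_zpow_iff_modEq.1 hk').dvd
  exact ⟨k, m, by linarith⟩

/-- A single prime exponent `p > |G|` that agrees with the exponent `r` on every element whose order
divides `n`, given by Dirichlet's theorem. -/
theorem exists_prime_pow_eq [Finite G] {n : ℕ} (hn : n ≠ 0) {r : ℤ} (h : IsCoprime r (n : ℤ)) :
    ∃ p : ℕ, p.Prime ∧ Nat.card G < p ∧ ∀ x : G, orderOf x ∣ n → x ^ r = x ^ p := by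
  obtain ⟨p, hgt, hp, hmod⟩ := Nat.forall_exists_prime_gt_and_zmodEq (Nat.card G) hn h
  refine ⟨p, hp, hgt, fun x hx => ?_⟩
  rw [← zpow_natCast, zpow_eq_zpow_iff_modEq]
  exact (hmod.of_dvd (Int.natCast_dvd_natCast.2 hx)).symm

theorem isQuasiBurnside_of_finite [Finite G] : IsQuasiBurnside G := by
  rintro r x y z rfl hx hy hz
  have hcop : IsCoprime r ((orderOf x * orderOf y * orderOf (x * y) : ℕ) : ℤ) := by
    push_cast
    exact ((isCoprime_orderOf hx).mul_right (isCoprime_orderOf hy)).mul_right (isCoprime_orderOf hz)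
  have hne (g : G) : orderOf g ≠ 0 := (orderOf_pos g).ne'
  obtain ⟨p, hp, hcard, hpow⟩ := exists_prime_pow_eq (G := G)
    (mul_ne_zero (mul_ne_zero (hne x) (hne y)) (hne (x * y))) hcop
  obtain ⟨x', y', h, hx', hy'⟩ := exists_conj_pow_mul hp hcard x y
  rw [hpow x ⟨orderOf y * orderOf (x * y), by ring⟩,
    hpow y ⟨orderOf x * orderOf (x * y), by ring⟩, hpow (x * y) (dvd_mul_left _ _)]
  exact ⟨x', y', _, h, hx', hy', IsConj.refl _⟩

/-- This is `exists_conj_pow_mul` for `x` and `u * x⁻¹ * u⁻¹`: the commutators `[x, u]` are exactly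
the products of `x` with a conjugate of `x⁻¹`. -/
theorem exists_commutator_pow [Finite G] {p : ℕ} (hp : p.Prime) (hcard : Nat.card G < p)
    (x u : G) :
    ∃ w : G, IsConj (x ^ p * w * (x ^ p)⁻¹ * w⁻¹) ((x * u * x⁻¹ * u⁻¹) ^ p) := by
  obtain ⟨x', y', h, hx', hy'⟩ := exists_conj_pow_mul hp hcard x (u * x⁻¹ * u⁻¹)
  obtain ⟨c, rfl⟩ := isConj_iff.1 hx'
  obtain ⟨d, rfl⟩ := isConj_iff.1 hy'
  refine ⟨c⁻¹ * d * u, isConj_iff.2 ⟨c, ?_⟩⟩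
  have h' : x * u * x⁻¹ * u⁻¹ = x * (u * x⁻¹ * u⁻¹) := by group
  rw [h', ← h, conj_pow, inv_pow]
  group

theorem isQuasiHonda_of_finite [Finite G] : IsQuasiHonda G := by
  rintro r x u z rfl hx hz
  have hcop : IsCoprime r ((orderOf x * orderOf (x * u * x⁻¹ * u⁻¹) : ℕ) : ℤ) := by
    push_cast
    exact (isCoprime_orderOf hx).mul_right (isCoprime_orderOf hz)
  obtain ⟨p, hp, hcard, hpow⟩ := exists_prime_pow_eq (G := G)
    (mul_ne_zero (orderOf_pos _).ne' (orderOf_pos _).ne') hcop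
  rw [hpow x (dvd_mul_right _ _), hpow (x * u * x⁻¹ * u⁻¹) (dvd_mul_left _ _)]
  exact exists_commutator_pow hp hcard x u

theorem isHonda_of_finite [Finite G] : IsHonda G := by
  rintro r x u z rfl hz
  obtain ⟨p, hp, hcard, hpow⟩ :=
    exists_prime_pow_eq (G := G) (orderOf_pos (x * u * x⁻¹ * u⁻¹)).ne' (isCoprime_orderOf hz)
  obtain ⟨w, hw⟩ := exists_commutator_pow hp hcard x u
  obtain ⟨c, hc⟩ := isConj_iff.1 hw
  refine ⟨c * x ^ p * c⁻¹, c * w * c⁻¹, ?_⟩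
  rw [hpow _ dvd_rfl, ← hc]
  group

end

theorem finite_group_quasiBurnside_quasiHonda_honda (G : Type*) [Group G] [Finite G] :
    IsQuasiBurnside G ∧ IsQuasiHonda G ∧ IsHonda G :=
  ⟨isQuasiBurnside_of_finite, isQuasiHonda_of_finite, isHonda_of_finite⟩
end

section
/- Let n ≥ 2 be an integer and let P_n be the group with presentation ⟨a, b, c ∣ aba⁻¹b⁻¹ = c, c^n = 1⟩. Then P_n is quasi-Burnside and quasi-Honda. -/
/-- The relations of the presentation `⟨a, b, c ∣ aba⁻¹b⁻¹ = c, c^n = 1⟩`,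
with generators `a = 0`, `b = 1`, `c = 2`. -/
def prideRels (n : ℕ) : Set (FreeGroup (Fin 3)) :=
  { FreeGroup.of 0 * FreeGroup.of 1 * (FreeGroup.of 0)⁻¹ * (FreeGroup.of 1)⁻¹ *
      (FreeGroup.of 2)⁻¹,
    (FreeGroup.of 2) ^ n }

/-- The group `P_n = ⟨a, b, c ∣ [a,b] = c, c^n = 1⟩`. -/
def PrideGroup (n : ℕ) : Type := PresentedGroup (prideRels n)

instance (n : ℕ) : Group (PrideGroup n) := by unfold PrideGroup; infer_instance

open Monoid

/-! ### Torsion in free products -/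

section FreeProduct

variable {ι : Type*} {G : ι → Type*} [∀ i, Group (G i)]

theorem neWord_prod_ne_one {i j : ι} (w : CoprodI.NeWord G i j) : w.prod ≠ 1 := by
  classical
  intro h
  have h1 : w.toWord = CoprodI.Word.empty := by
    apply CoprodI.Word.equiv.symm.injective
    change w.toWord.prod = CoprodI.Word.empty.prod
    rw [CoprodI.Word.prod_empty]
    exact h
  exact w.toList_ne_nil (congrArg CoprodI.Word.toList h1)

/-- Powers of a cyclically reduced word are obtained by concatenation, without cancellation. -/
theorem neWord_pow {i j : ι} (hij : i ≠ j) (w : CoprodI.NeWord G i j) (k : ℕ) :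
    ∃ w' : CoprodI.NeWord G i j, w'.prod = w.prod ^ (k + 1) := by
  induction k with
  | zero => exact ⟨w, by simp⟩
  | succ k ih =>
    obtain ⟨w', h⟩ := ih
    exact ⟨w'.append hij.symm w, by rw [CoprodI.NeWord.append_prod, h, pow_succ _ (k + 1)]⟩

/-- A torsion reduced word is conjugate to a letter, by induction on its length. If the outer letters
lie in the same factor, conjugation merges them and shortens the word; if not, the word is
cyclically reduced and has infinite order. -/
theorem word_torsion [Nonempty ι] (N : ℕ) (w : CoprodI.Word G) (hN : w.toList.length ≤ N)
    (hw : IsOfFinOrder w.prod) : ∃ (i : ι) (g : G i), IsConj (CoprodI.of g) w.prod := by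
  induction N generalizing w with
  | zero =>
    obtain ⟨i⟩ := ‹Nonempty ι›
    have : w.toList = [] := by simpa using hN
    exact ⟨i, 1, by simp [CoprodI.Word.prod, this]⟩
  | succ N ih =>
    obtain ⟨L, h1, hc⟩ := w
    rcases L with _ | ⟨⟨i, g⟩, L⟩
    · exact ih _ (by simp) hw
    rcases List.eq_nil_or_concat L with rfl | ⟨M, ⟨j, h⟩, hL⟩
    · exact ⟨i, g, by simpa [CoprodI.Word.prod] using ⟨1, by simp⟩⟩
    rw [List.concat_eq_append] at hL
    subst hL
    by_cases hij : i = j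
    · subst hij
      have hc' := hc.tail
      rw [List.tail_cons, List.isChain_append] at hc'
      have hconj : IsConj
          ((M.map fun l => (CoprodI.of l.2 : CoprodI G)).prod * CoprodI.of (h * g))
          (CoprodI.of g * ((M.map fun l => (CoprodI.of l.2 : CoprodI G)).prod *
            CoprodI.of h)) := by
        rw [isConj_iff]
        exact ⟨CoprodI.of g, by simp [mul_assoc]⟩
      have hw' := hw
      simp only [CoprodI.Word.prod, List.map_cons, List.prod_cons, List.map_append,
        List.prod_append, List.map_nil, List.prod_nil, mul_one] at hw' ⊢
      have hfin := hconj.symm.isOfFinOrder hw'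
      have key : ∃ v : CoprodI.Word G, v.toList.length ≤ N ∧
          v.prod = (M.map fun l => (CoprodI.of l.2 : CoprodI G)).prod * CoprodI.of (h * g) := by
        by_cases hg : h * g = 1
        · exact ⟨⟨M, fun l hl => h1 l (by simp [hl]), hc'.1⟩, by simp at hN ⊢; omega,
            by simp [CoprodI.Word.prod, hg]⟩
        · refine ⟨⟨M ++ [⟨i, h * g⟩], ?_, ?_⟩, by simp at hN ⊢; omega,
            by simp [CoprodI.Word.prod]⟩
          · intro l hl
            rcases List.mem_append.1 hl with hl | hl
            · exact h1 l (by simp [hl])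
            · rw [List.mem_singleton] at hl
              subst hl
              exact hg
          · rw [List.isChain_append]
            refine ⟨hc'.1, by simp, ?_⟩
            simpa using hc'.2.2
      obtain ⟨v, hv, hvp⟩ := key
      obtain ⟨k, t, ht⟩ := ih v hv (by rw [hvp]; exact hfin)
      exact ⟨k, t, by rw [hvp] at ht; exact ht.trans hconj⟩
    · exfalso
      obtain ⟨i', j', w', hw'⟩ := CoprodI.NeWord.of_word
        (⟨⟨i, g⟩ :: (M ++ [⟨j, h⟩]), h1, hc⟩ : CoprodI.Word G)
        (fun h => by simpa using congrArg CoprodI.Word.toList h)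
      have hl := congrArg CoprodI.Word.toList hw'
      have hh := w'.toList_head?
      have ht := w'.toList_getLast?
      have hl' : w'.toList = ⟨i, g⟩ :: (M ++ [⟨j, h⟩]) := hl
      rw [hl'] at hh ht
      rw [← List.cons_append, List.getLast?_append] at ht
      simp only [List.head?_cons, Option.some.injEq, Sigma.mk.injEq] at hh
      simp at ht
      obtain ⟨rfl, -⟩ := hh
      obtain ⟨rfl, -⟩ := ht
      obtain ⟨k, hk, hpow⟩ := hw.exists_pow_eq_one
      obtain ⟨w'', hw''⟩ := neWord_pow hij w' (k - 1)
      apply neWord_prod_ne_one w''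
      rw [hw'', Nat.sub_add_cancel hk, CoprodI.NeWord.prod, hw', hpow]

/-- Torsion elements of a free product are conjugate into a factor. -/
theorem coprodI_torsion [Nonempty ι] (x : CoprodI G) (hx : IsOfFinOrder x) :
    ∃ (i : ι) (g : G i), IsConj (CoprodI.of g) x := by
  classical
  have h := CoprodI.Word.equiv.symm_apply_apply x
  have := word_torsion _ (CoprodI.Word.equiv x) le_rfl (by
    change IsOfFinOrder (CoprodI.Word.equiv.symm (CoprodI.Word.equiv x)); rwa [h])
  change ∃ (i : ι) (g : G i), IsConj _ (CoprodI.Word.equiv.symm (CoprodI.Word.equiv x)) at this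
  rwa [h] at this

end FreeProduct

/-! ### Homomorphisms out of cyclic groups -/

section Cyclic

/-- The homomorphism `ℤ/m → H` sending the generator to `g`, where `g ^ m = 1`. -/
noncomputable def zmodHom {H : Type*} [Group H] (m : ℕ) (g : H) (hg : g ^ m = 1) :
    Multiplicative (ZMod m) →* H :=
  AddMonoidHom.toMultiplicativeLeft (ZMod.lift m ⟨zmultiplesHom (Additive H) (Additive.ofMul g), by
    simpa [← ofMul_zpow] using congrArg Additive.ofMul hg⟩)

theorem zmodHom_gen {H : Type*} [Group H] (m : ℕ) (g : H) (hg : g ^ m = 1) :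
    zmodHom m g hg (Multiplicative.ofAdd 1) = g := by
  have h := ZMod.lift_coe m (⟨zmultiplesHom (Additive H) (Additive.ofMul g), by
    simpa [← ofMul_zpow] using congrArg Additive.ofMul hg⟩ :
      { f : ℤ →+ Additive H // f m = 0 }) 1
  simp only [Int.cast_one] at h
  simp only [zmodHom, AddMonoidHom.toMultiplicativeLeft_apply_apply, toAdd_ofAdd, h]
  simp

theorem zmod_exists_zpow (m : ℕ) (y : Multiplicative (ZMod m)) :
    ∃ k : ℤ, y = (Multiplicative.ofAdd (1 : ZMod m)) ^ k := by
  obtain ⟨k, hk⟩ := ZMod.intCast_surjective (Multiplicative.toAdd y)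
  exact ⟨k, by rw [← ofAdd_zsmul]; simp [hk]⟩

end Cyclic

/-! ### The free product of cyclic groups and its shift -/

section Kernel

/-- The orders of the cyclic factors of `Kern n`. As `ZMod 0` is `ℤ`, the value `0` stands for an
infinite cyclic factor. -/
def kernOrder (n : ℕ) : Option ℤ → ℕ
  | none => 0
  | some _ => n

/-- The free product of `ℤ`, generated by `b`, and of copies of `ℤ/n`, generated by `c_i` for
`i : ℤ`. It is the kernel of `P_n → ℤ`, `a ↦ 1`, `b ↦ 0`, with `c_i = aⁱ c a⁻ⁱ`. -/
abbrev Kern (n : ℕ) : Type := CoprodI fun o : Option ℤ => Multiplicative (ZMod (kernOrder n o))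

/-- The generators of `Kern n`: `b` for the index `none`, and `c_i` for `some i`. -/
noncomputable def kgen (n : ℕ) (o : Option ℤ) : Kern n :=
  CoprodI.of (i := o) (Multiplicative.ofAdd (1 : ZMod (kernOrder n o)))

theorem kgen_pow (n : ℕ) (i : ℤ) : kgen n (some i) ^ n = 1 := by
  have h : (Multiplicative.ofAdd (1 : ZMod n)) ^ n = 1 := by
    rw [← ofAdd_nsmul]; simp
  rw [kgen, ← map_pow]
  exact (congrArg _ h).trans (map_one _)

/-- The homomorphism out of `Kern n` with prescribed values on the generators. -/
noncomputable def klift {H : Type*} [Group H] (n : ℕ) (b : H) (c : ℤ → H) (hc : ∀ i, c i ^ n = 1) :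
    Kern n →* H :=
  CoprodI.lift fun o => zmodHom (kernOrder n o) (o.elim b c) (by
    cases o with
    | none => exact pow_zero _
    | some i => exact hc i)

theorem klift_none {H : Type*} [Group H] (n : ℕ) (b : H) (c : ℤ → H) (hc : ∀ i, c i ^ n = 1) :
    klift n b c hc (kgen n none) = b := by
  rw [klift, kgen, CoprodI.lift_of, zmodHom_gen, Option.elim]

theorem klift_some {H : Type*} [Group H] (n : ℕ) (b : H) (c : ℤ → H) (hc : ∀ i, c i ^ n = 1)
    (i : ℤ) : klift n b c hc (kgen n (some i)) = c i := by
  rw [klift, kgen, CoprodI.lift_of, zmodHom_gen, Option.elim]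

theorem kern_hom_ext {H : Type*} [Group H] {n : ℕ} {f g : Kern n →* H}
    (h0 : f (kgen n none) = g (kgen n none))
    (h1 : ∀ i, f (kgen n (some i)) = g (kgen n (some i))) : f = g := by
  apply CoprodI.ext_hom
  intro o
  refine MonoidHom.ext fun y => ?_
  obtain ⟨k, rfl⟩ := zmod_exists_zpow _ y
  have h : f (kgen n o) = g (kgen n o) := by
    cases o with
    | none => exact h0
    | some i => exact h1 i
  rw [map_zpow, map_zpow]
  exact congrArg (· ^ k) h

/-- The map `b ↦ c_0 b`, `c_i ↦ c_{i+1}`, which is conjugation by `a` in `P_n`. -/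
noncomputable def shiftHom (n : ℕ) : Kern n →* Kern n :=
  klift n (kgen n (some 0) * kgen n none) (fun i => kgen n (some (i + 1))) fun _ => kgen_pow n _

/-- The inverse of `shiftHom`: `b ↦ c_{-1}⁻¹ b`, `c_i ↦ c_{i-1}`. -/
noncomputable def unshiftHom (n : ℕ) : Kern n →* Kern n :=
  klift n ((kgen n (some (-1)))⁻¹ * kgen n none) (fun i => kgen n (some (i - 1)))
    fun _ => kgen_pow n _

/-- The automorphism of `Kern n` given by `shiftHom`. -/
noncomputable def shift (n : ℕ) : MulAut (Kern n) :=
  MonoidHom.toMulEquiv (shiftHom n) (unshiftHom n)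
    (kern_hom_ext (by simp [shiftHom, unshiftHom, klift_none, klift_some])
      (by simp [shiftHom, unshiftHom, klift_some]))
    (kern_hom_ext (by simp [shiftHom, unshiftHom, klift_none, klift_some])
      (by simp [shiftHom, unshiftHom, klift_some]))

theorem shift_none (n : ℕ) : shift n (kgen n none) = kgen n (some 0) * kgen n none :=
  klift_none n (kgen n (some 0) * kgen n none) (fun i => kgen n (some (i + 1))) fun _ => kgen_pow n _

theorem shift_some (n : ℕ) (i : ℤ) : shift n (kgen n (some i)) = kgen n (some (i + 1)) :=
  klift_some n _ _ (fun _ => kgen_pow n _) i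

/-- The generator `b` may be left out, since the factor it generates is torsion free. -/
theorem kern_torsion {H : Type*} [Group H] {n : ℕ} (f : Kern n →* H) (x : Kern n)
    (hx : IsOfFinOrder x) : ∃ (i k : ℤ), IsConj (f (kgen n (some i)) ^ k) (f x) := by
  obtain ⟨o, y, hy⟩ := coprodI_torsion x hx
  cases o with
  | none =>
    have hfin : IsOfFinOrder y :=
      (CoprodI.of_injective _).isOfFinOrder_iff.1 (hy.symm.isOfFinOrder hx)
    -- The factor with index `none` is `ℤ`, which is torsion free.
    have h1 : y = 1 := (isOfFinOrder_iff_eq_one (G := Multiplicative ℤ) y).1 hfin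
    refine ⟨0, 0, ?_⟩
    rw [h1, map_one] at hy
    rw [isConj_one_right.1 hy]
    simp
  | some i =>
    obtain ⟨k, rfl⟩ := zmod_exists_zpow _ y
    refine ⟨i, k, ?_⟩
    rw [← map_zpow, kgen, ← map_zpow]
    exact f.map_isConj hy

end Kernel

/-! ### Torsion in the group `P_n` -/

section Presentation

variable (n : ℕ)

/-- The generator `a` of `P_n`. -/
def gA : PrideGroup n := PresentedGroup.of (rels := prideRels n) 0

/-- The generator `b` of `P_n`. -/
def gB : PrideGroup n := PresentedGroup.of (rels := prideRels n) 1

/-- The generator `c` of `P_n`. -/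
def gC : PrideGroup n := PresentedGroup.of (rels := prideRels n) 2

theorem gC_eq : gA n * gB n * (gA n)⁻¹ * (gB n)⁻¹ = gC n := by
  have h := PresentedGroup.one_of_mem (rels := prideRels n) (x := FreeGroup.of 0 * FreeGroup.of 1 *
    (FreeGroup.of 0)⁻¹ * (FreeGroup.of 1)⁻¹ * (FreeGroup.of 2)⁻¹) (by simp [prideRels])
  simp only [map_mul, map_inv] at h
  exact mul_inv_eq_one.1 h

theorem gC_pow : gC n ^ n = 1 := by
  have h := PresentedGroup.one_of_mem (rels := prideRels n) (x := (FreeGroup.of 2) ^ n)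
    (by simp [prideRels])
  rw [map_pow] at h
  exact h

/-- The universal property of the presentation. -/
theorem pride_lift {H : Type*} [Group H] (a b c : H) (h1 : a * b * a⁻¹ * b⁻¹ = c)
    (h2 : c ^ n = 1) :
    ∃ f : PrideGroup n →* H, f (gA n) = a ∧ f (gB n) = b ∧ f (gC n) = c := by
  have h : ∀ r ∈ prideRels n, FreeGroup.lift ![a, b, c] r = 1 := by
    rintro r (rfl | rfl)
    · simp [h1]
    · simp [h2]
  exact ⟨PresentedGroup.toGroup h, PresentedGroup.toGroup.of h, PresentedGroup.toGroup.of h,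
    PresentedGroup.toGroup.of h⟩

theorem pride_hom_ext {H : Type*} [Group H] {f g : PrideGroup n →* H}
    (hA : f (gA n) = g (gA n)) (hB : f (gB n) = g (gB n)) : f = g := by
  have hC : f (gC n) = g (gC n) := by
    rw [← gC_eq]; simp [hA, hB]
  apply PresentedGroup.ext (rels := prideRels n)
  intro i
  fin_cases i
  · exact hA
  · exact hB
  · exact hC

/-- The homomorphism `b ↦ b`, `c_i ↦ aⁱ c a⁻ⁱ`. -/
noncomputable def kernToPride : Kern n →* PrideGroup n :=
  klift n (gB n) (fun i => gA n ^ i * gC n * (gA n ^ i)⁻¹) fun i => by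
    rw [conj_pow, gC_pow]; simp

theorem kernToPride_shift (k : Kern n) :
    kernToPride n (shift n k) = gA n * kernToPride n k * (gA n)⁻¹ := by
  have h : (kernToPride n).comp (shift n).toMonoidHom =
      (MulAut.conj (gA n)).toMonoidHom.comp (kernToPride n) := by
    apply kern_hom_ext
    · simp only [MonoidHom.comp_apply, MulEquiv.coe_toMonoidHom, shift_none, map_mul,
        MulAut.conj_apply]
      simp only [kernToPride, klift_none, klift_some, ← gC_eq]
      simp
    · intro i
      simp only [MonoidHom.comp_apply, MulEquiv.coe_toMonoidHom, shift_some, MulAut.conj_apply]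
      simp only [kernToPride, klift_some, add_comm i 1, zpow_add, zpow_one, mul_inv_rev, mul_assoc]
  exact DFunLike.congr_fun h k

theorem kernToPride_shift_zpow (m : ℤ) (k : Kern n) :
    kernToPride n ((shift n ^ m) k) = gA n ^ m * kernToPride n k * (gA n ^ m)⁻¹ := by
  induction m generalizing k with
  | zero => simp
  | succ m ih =>
    rw [zpow_add_one, MulAut.mul_apply, ih, kernToPride_shift, zpow_add_one]
    group
  | pred m ih =>
    have h := kernToPride_shift n ((shift n)⁻¹ k)
    rw [MulAut.apply_inv_self] at h
    rw [zpow_sub_one, MulAut.mul_apply, ih, zpow_sub_one, h]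
    group

/-- The extension `Kern n ⋊ ℤ`, the generator of `ℤ` acting by `shift n`. It is isomorphic to `P_n`;
only an injection of `P_n` into it is used. -/
abbrev KernExt (n : ℕ) : Type := Kern n ⋊[zpowersHom (MulAut (Kern n)) (shift n)] Multiplicative ℤ

/-- The torsion theorem for `P_n`. A torsion element has trivial image in `ℤ`, so it comes from
the free product `Kern n`, where torsion is conjugate into a factor. -/
theorem pride_torsion (x : PrideGroup n) (hx : IsOfFinOrder x) :
    ∃ k : ℤ, IsConj (gC n ^ k) x := by
  obtain ⟨φ, hA, hB, -⟩ := pride_lift n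
    (SemidirectProduct.inr (Multiplicative.ofAdd 1) : KernExt n)
    (SemidirectProduct.inl (kgen n none))
    (SemidirectProduct.inl (kgen n (some 0)))
    (by
      rw [← map_inv SemidirectProduct.inr, ← SemidirectProduct.inl_aut]
      rw [zpowersHom_apply, toAdd_ofAdd, zpow_one, shift_none, map_mul, mul_inv_cancel_right])
    (by rw [← map_pow, kgen_pow, map_one])
  let ψ : KernExt n →* PrideGroup n := SemidirectProduct.lift (kernToPride n) (zpowersHom _ (gA n)) (by
    intro g
    refine MonoidHom.ext fun k => ?_
    exact kernToPride_shift_zpow n (Multiplicative.toAdd g) k)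
  have hψφ : ψ.comp φ = MonoidHom.id _ := by
    apply pride_hom_ext
    · simp [hA, ψ]
    · simp only [MonoidHom.comp_apply, hB, ψ, SemidirectProduct.lift_inl, MonoidHom.id_apply]
      exact klift_none _ _ _ _
  have hfin := φ.isOfFinOrder hx
  have hright : (φ x).right = 1 :=
    (isOfFinOrder_iff_eq_one _).1 (SemidirectProduct.rightHom.isOfFinOrder hfin)
  have hleft : φ x = SemidirectProduct.inl (φ x).left := by
    ext
    · simp
    · simp [hright]
  have hx' : kernToPride n (φ x).left = x := by
    have h := DFunLike.congr_fun hψφ x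
    rw [MonoidHom.comp_apply, hleft] at h
    simpa [ψ] using h
  rw [hleft] at hfin
  obtain ⟨i, k, hk⟩ := kern_torsion (kernToPride n) (φ x).left
    (SemidirectProduct.inl_injective.isOfFinOrder_iff.1 hfin)
  refine ⟨k, IsConj.trans ?_ (hx' ▸ hk)⟩
  rw [isConj_iff]
  exact ⟨gA n ^ i, by simp [kernToPride, klift_some, conj_zpow]⟩

end Presentation

/-! ### The Heisenberg quotient -/

section Heisenberg

/-- The Heisenberg group over `ℤ/n`: the triple `(p, q, t)` stands for the upper unitriangular
`3 × 3` matrix with entries `p`, `q` next to the diagonal and `t` in the corner. -/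
@[ext]
structure Heis (n : ℕ) where
  p : ZMod n
  q : ZMod n
  t : ZMod n

namespace Heis

variable {n : ℕ}

instance : Mul (Heis n) := ⟨fun x y => ⟨x.p + y.p, x.q + y.q, x.t + y.t + x.p * y.q⟩⟩
instance : One (Heis n) := ⟨⟨0, 0, 0⟩⟩
instance : Inv (Heis n) := ⟨fun x => ⟨-x.p, -x.q, -x.t + x.p * x.q⟩⟩

theorem mul_def (x y : Heis n) : x * y = ⟨x.p + y.p, x.q + y.q, x.t + y.t + x.p * y.q⟩ := rfl
theorem one_def : (1 : Heis n) = ⟨0, 0, 0⟩ := rfl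
theorem inv_def (x : Heis n) : x⁻¹ = ⟨-x.p, -x.q, -x.t + x.p * x.q⟩ := rfl

instance : Group (Heis n) := Group.ofLeftAxioms
  (fun x y z => by simp only [mul_def]; ext <;> ring)
  (fun x => by simp [mul_def, one_def])
  (fun x => by simp [mul_def, one_def, inv_def])

/-- The inclusion of the central subgroup `ℤ/n` of corner entries. -/
def central : Multiplicative (ZMod n) →* Heis n where
  toFun s := ⟨0, 0, Multiplicative.toAdd s⟩
  map_one' := rfl
  map_mul' s t := by simp [mul_def]

theorem central_conj (g : Heis n) (s : Multiplicative (ZMod n)) :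
    g * central s * g⁻¹ = central s := by
  simp only [central, MonoidHom.coe_mk, OneHom.coe_mk, mul_def, inv_def]
  ext <;> ring

theorem central_injective : Function.Injective (central (n := n)) := fun s t h => by
  simpa [central] using h

end Heis

end Heisenberg

/-- In the Heisenberg quotient of `P_n` the image of `c` is central of order `n`, so the image of a
conjugate of `c ^ k` determines `k` modulo `n`. -/
theorem exists_central_hom (n : ℕ) : ∃ f : PrideGroup n →* Heis n,
    ∀ (k : ℤ) (x : PrideGroup n), IsConj (gC n ^ k) x →
      f x = Heis.central (Multiplicative.ofAdd (k : ZMod n)) := by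
  obtain ⟨f, -, -, hC⟩ := pride_lift n (⟨1, 0, 0⟩ : Heis n) ⟨0, 1, 0⟩
    (Heis.central (Multiplicative.ofAdd (1 : ZMod n)))
    (by simp [Heis.central, Heis.mul_def, Heis.inv_def])
    (by rw [← map_pow, ← ofAdd_nsmul]; simp)
  refine ⟨f, fun k x h => ?_⟩
  obtain ⟨g, rfl⟩ := isConj_iff.1 h
  rw [map_mul, map_mul, map_inv, map_zpow, hC, ← map_zpow, Heis.central_conj, ← ofAdd_zsmul]
  simp

theorem gC_zpow_eq (n : ℕ) {k l : ℤ} (h : (k : ZMod n) = l) : gC n ^ k = gC n ^ l := by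
  rw [ZMod.intCast_eq_intCast_iff_dvd_sub] at h
  obtain ⟨m, hm⟩ := h
  rw [show l = k + n * m by omega, zpow_add, zpow_mul, zpow_natCast, gC_pow]
  simp

/-! ### The quasi-Burnside and quasi-Honda properties -/

theorem eq_one_or_neg_one_of_zpowers {G : Type*} [Group G] {x : G} {r : ℤ}
    (h : Subgroup.zpowers x = Subgroup.zpowers (x ^ r)) (hx : ¬ IsOfFinOrder x) :
    r = 1 ∨ r = -1 := by
  have hmem : x ∈ Subgroup.zpowers (x ^ r) := h ▸ Subgroup.mem_zpowers x
  obtain ⟨k, hk⟩ := Subgroup.mem_zpowers_iff.1 hmem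
  rw [← zpow_mul] at hk
  have := injective_zpow_iff_not_isOfFinOrder.2 hx (hk.trans (zpow_one x).symm)
  exact Int.isUnit_iff.1 (IsUnit.of_mul_eq_one _ this)

theorem isConj_zpow {G : Type*} [Group G] {x y : G} (h : IsConj x y) (r : ℤ) :
    IsConj (x ^ r) (y ^ r) := by
  obtain ⟨g, rfl⟩ := isConj_iff.1 h
  exact isConj_iff.2 ⟨g, conj_zpow.symm⟩

theorem pride_quasiBurnside (n : ℕ) : IsQuasiBurnside (PrideGroup n) := by
  intro r x y z hxy hx hy hz
  by_cases hr : r = 1 ∨ r = -1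
  · subst hxy
    rcases hr with rfl | rfl
    · exact ⟨x, y, x * y, rfl, by rw [zpow_one], by rw [zpow_one], by rw [zpow_one]⟩
    -- `(x y)⁻¹ = y⁻¹ x⁻¹ = x⁻¹ (x y⁻¹ x⁻¹)`.
    · refine ⟨x⁻¹, x * y⁻¹ * x⁻¹, (x * y)⁻¹, by group, by rw [zpow_neg_one], ?_, by rw [zpow_neg_one]⟩
      rw [isConj_iff]
      exact ⟨x, by simp⟩
  · obtain ⟨i, hi⟩ := pride_torsion n x
      (by_contra fun h => hr (eq_one_or_neg_one_of_zpowers hx h))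
    obtain ⟨j, hj⟩ := pride_torsion n y
      (by_contra fun h => hr (eq_one_or_neg_one_of_zpowers hy h))
    obtain ⟨l, hl⟩ := pride_torsion n z
      (by_contra fun h => hr (eq_one_or_neg_one_of_zpowers hz h))
    obtain ⟨f, hf⟩ := exists_central_hom n
    have h := congrArg f hxy
    rw [map_mul, hf i x hi, hf j y hj, hf l z hl, ← map_mul, ← ofAdd_add] at h
    have h' : ((i + j : ℤ) : ZMod n) = l := by
      push_cast
      exact Heis.central_injective h
    refine ⟨(gC n ^ i) ^ r, (gC n ^ j) ^ r, (gC n ^ l) ^ r, ?_, (isConj_zpow hi r).symm,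
      (isConj_zpow hj r).symm, (isConj_zpow hl r).symm⟩
    rw [← gC_zpow_eq n h', ← zpow_mul, ← zpow_mul, ← zpow_mul, ← zpow_add, add_mul]

theorem pride_quasiHonda (n : ℕ) : IsQuasiHonda (PrideGroup n) := by
  intro r x u z hxu hx hz
  by_cases hr : r = 1 ∨ r = -1
  · subst hxu
    rcases hr with rfl | rfl
    · exact ⟨u, by rw [zpow_one, zpow_one]⟩
    · refine ⟨u, ?_⟩
      rw [isConj_iff]
      exact ⟨x, by group⟩
  · obtain ⟨i, hi⟩ := pride_torsion n x
      (by_contra fun h => hr (eq_one_or_neg_one_of_zpowers hx h))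
    obtain ⟨l, hl⟩ := pride_torsion n z
      (by_contra fun h => hr (eq_one_or_neg_one_of_zpowers hz h))
    -- `f x` is central, so `f z = 1`; as `z` is conjugate to a power of `c`, this forces `z = 1`.
    obtain ⟨f, hf⟩ := exists_central_hom n
    have h := congrArg f hxu
    have h0 : f x * f u * (f x)⁻¹ * (f u)⁻¹ = 1 := by
      have hc := Heis.central_conj (f u) (Multiplicative.ofAdd (i : ZMod n))
      rw [hf i x hi]
      nth_rewrite 1 [← hc]
      group
    simp only [map_mul, map_inv] at h
    rw [h0, hf l z hl, ← map_one Heis.central] at h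
    have h' : ((l : ℤ) : ZMod n) = (0 : ℤ) := by
      rw [Int.cast_zero]
      exact (Heis.central_injective h).symm
    rw [gC_zpow_eq n h', zpow_zero, isConj_one_right] at hl
    exact ⟨1, by simp [hl]⟩

theorem prideGroup_quasiBurnside_quasiHonda (n : ℕ) (hn : 2 ≤ n) :
    IsQuasiBurnside (PrideGroup n) ∧ IsQuasiHonda (PrideGroup n) := by
  exact ⟨pride_quasiBurnside n, pride_quasiHonda n⟩
end

section
/- Let k, m ≥ 2 be integers and let r ∈ {1, -1} in ℤ/lcm(k,m)ℤ. Then every group is (k,m,r)-quasi-Honda. Moreover, if gcd(k,m) ≤ 2, then every group is (k,m,r*)-quasi-Honda, where r* is the unique unit in ℤ/lcm(k,m)ℤ with r* ≡ r (mod k) and r* ≡ -r (mod m). -/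
universe u

theorem zpow_eq_self_or_inv {G : Type*} [Group G] {n : ℕ} {g : G} (hg : g ^ n = 1) {ρ : ℤ}
    (h : (ρ : ZMod n) = 1 ∨ (ρ : ZMod n) = -1) : g ^ ρ = g ∨ g ^ ρ = g⁻¹ := by
  have key : ∀ a : ℤ, (ρ : ZMod n) = (a : ZMod n) → g ^ ρ = g ^ a := by
    intro a ha
    obtain ⟨c, hc⟩ := (ZMod.intCast_eq_intCast_iff_dvd_sub a ρ n).mp ha.symm
    have hρ : ρ = a + n * c := by linarith
    rw [hρ, zpow_add, zpow_mul, zpow_natCast, hg, one_zpow, mul_one]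
  rcases h with h | h
  · left; simpa using key 1 (by simpa using h)
  · right; simpa using key (-1) (by simpa using h)

theorem exists_isConj_commutator {G : Type*} [Group G] (x u : G) {y v : G}
    (hy : y = x ∨ y = x⁻¹)
    (hv : v = x * u * x⁻¹ * u⁻¹ ∨ v = (x * u * x⁻¹ * u⁻¹)⁻¹) :
    ∃ w : G, IsConj (y * w * y⁻¹ * w⁻¹) v := by
  rcases hy with rfl | rfl <;> rcases hv with rfl | rfl
  · exact ⟨u, IsConj.refl _⟩
  · exact ⟨u⁻¹, isConj_iff.mpr ⟨u, by group⟩⟩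
  · exact ⟨u⁻¹, isConj_iff.mpr ⟨u * x, by group⟩⟩
  · exact ⟨u, isConj_iff.mpr ⟨x, by group⟩⟩

/-- The quasi-Honda property holds as soon as the residues of `s` modulo `k` and modulo `m` are
each `1` or `-1`, with no relation required between the two signs. -/
theorem isQuasiHondaWith_of_cast {k m : ℕ} (s : (ZMod (Nat.lcm k m))ˣ)
    (h₁ : ZMod.castHom (Nat.dvd_lcm_left k m) (ZMod k) (s : ZMod (Nat.lcm k m)) = 1 ∨
      ZMod.castHom (Nat.dvd_lcm_left k m) (ZMod k) (s : ZMod (Nat.lcm k m)) = -1)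
    (h₂ : ZMod.castHom (Nat.dvd_lcm_right k m) (ZMod m) (s : ZMod (Nat.lcm k m)) = 1 ∨
      ZMod.castHom (Nat.dvd_lcm_right k m) (ZMod m) (s : ZMod (Nat.lcm k m)) = -1)
    (G : Type*) [Group G] : IsQuasiHondaWith k m (Nat.lcm k m) s G := by
  intro ρ hρ x u z hz hx hzm
  rw [← hρ, map_intCast] at h₁ h₂
  subst hz
  exact exists_isConj_commutator x u (zpow_eq_self_or_inv hx h₁) (zpow_eq_self_or_inv hzm h₂)

theorem quasiHonda_of_plus_minus_one (k m : ℕ) (hk : 2 ≤ k) (hm : 2 ≤ m)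
    (r : (ZMod (Nat.lcm k m))ˣ)
    (hr : (r : ZMod (Nat.lcm k m)) = 1 ∨ (r : ZMod (Nat.lcm k m)) = -1) :
    (∀ (G : Type u) [Group G], IsQuasiHondaWith k m (Nat.lcm k m) r G) ∧
      (Nat.gcd k m ≤ 2 →
        ∀ rstar : (ZMod (Nat.lcm k m))ˣ,
          ZMod.castHom (Nat.dvd_lcm_left k m) (ZMod k) (rstar : ZMod (Nat.lcm k m)) =
            ZMod.castHom (Nat.dvd_lcm_left k m) (ZMod k) (r : ZMod (Nat.lcm k m)) →
          ZMod.castHom (Nat.dvd_lcm_right k m) (ZMod m) (rstar : ZMod (Nat.lcm k m)) =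
            - ZMod.castHom (Nat.dvd_lcm_right k m) (ZMod m) (r : ZMod (Nat.lcm k m)) →
          ∀ (G : Type u) [Group G], IsQuasiHondaWith k m (Nat.lcm k m) rstar G) := by
  have h₁ : ZMod.castHom (Nat.dvd_lcm_left k m) (ZMod k) (r : ZMod (Nat.lcm k m)) = 1 ∨
      ZMod.castHom (Nat.dvd_lcm_left k m) (ZMod k) (r : ZMod (Nat.lcm k m)) = -1 := by
    rcases hr with h | h
    · left; rw [h, map_one]
    · right; rw [h, map_neg, map_one]
  have h₂ : ZMod.castHom (Nat.dvd_lcm_right k m) (ZMod m) (r : ZMod (Nat.lcm k m)) = 1 ∨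
      ZMod.castHom (Nat.dvd_lcm_right k m) (ZMod m) (r : ZMod (Nat.lcm k m)) = -1 := by
    rcases hr with h | h
    · left; rw [h, map_one]
    · right; rw [h, map_neg, map_one]
  refine ⟨fun G _ => isQuasiHondaWith_of_cast r h₁ h₂ G, fun _ s hs₁ hs₂ G _ => ?_⟩
  refine isQuasiHondaWith_of_cast s (by rw [hs₁]; exact h₁) ?_ G
  rw [hs₂]
  rcases h₂ with h | h
  · right; rw [h]
  · left; rw [h, neg_neg]
end

section
/- Let k, l, m ≥ 2 be integers, let r be a unit in ℤ/lcm(k,l,m)ℤ with integer representative ρ, and let B_{k,l,m} be the group with presentation ⟨a, c ∣ a^k = (a⁻¹c)^l = c^m = 1⟩. Then every group is (k,l,m,r)-quasi-Burnside if and only if there exist g, h ∈ B_{k,l,m} such that a^ρ · g(a⁻¹c)^ρ g⁻¹ = h c^ρ h⁻¹. -/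
/-- The relations of the presentation `⟨a, c ∣ a^k = (a⁻¹c)^l = c^m = 1⟩`, with
generators `a = 0`, `c = 1`. -/
def vonDyckRels (k l m : ℕ) : Set (FreeGroup (Fin 2)) :=
  { (FreeGroup.of 0) ^ k, ((FreeGroup.of 0)⁻¹ * FreeGroup.of 1) ^ l, (FreeGroup.of 1) ^ m }

/-- The von Dyck group `B_{k,l,m} = ⟨a, c ∣ a^k = (a⁻¹c)^l = c^m = 1⟩`. -/
def VonDyck (k l m : ℕ) : Type := PresentedGroup (vonDyckRels k l m)

instance (k l m : ℕ) : Group (VonDyck k l m) := by unfold VonDyck; infer_instance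

/-- The generator `a` of `B_{k,l,m}`. -/
def VonDyck.a (k l m : ℕ) : VonDyck k l m := PresentedGroup.of 0

/-- The generator `c` of `B_{k,l,m}`. -/
def VonDyck.c (k l m : ℕ) : VonDyck k l m := PresentedGroup.of 1

namespace VonDyck

variable (k l m : ℕ)

lemma a_pow : VonDyck.a k l m ^ k = 1 :=
  PresentedGroup.one_of_mem (rels := vonDyckRels k l m) (x := FreeGroup.of 0 ^ k)
    (by simp [vonDyckRels])

lemma ac_pow : ((VonDyck.a k l m)⁻¹ * VonDyck.c k l m) ^ l = 1 :=
  PresentedGroup.one_of_mem (rels := vonDyckRels k l m)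
    (x := ((FreeGroup.of 0)⁻¹ * FreeGroup.of 1) ^ l) (by simp [vonDyckRels])

lemma c_pow : VonDyck.c k l m ^ m = 1 :=
  PresentedGroup.one_of_mem (rels := vonDyckRels k l m) (x := FreeGroup.of 1 ^ m)
    (by simp [vonDyckRels])

variable {k l m}

/-- The existence half of the universal property of the von Dyck group. -/
lemma exists_hom {G : Type*} [Group G] {x z : G} (hx : x ^ k = 1) (hy : (x⁻¹ * z) ^ l = 1)
    (hz : z ^ m = 1) :
    ∃ f : VonDyck k l m →* G, f (VonDyck.a k l m) = x ∧ f (VonDyck.c k l m) = z := by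
  have h : ∀ w ∈ vonDyckRels k l m, FreeGroup.lift ![x, z] w = 1 := by
    rintro w (rfl | rfl | rfl) <;> simpa
  exact ⟨PresentedGroup.toGroup h, PresentedGroup.toGroup.of h, PresentedGroup.toGroup.of h⟩

end VonDyck

lemma zpow_eq_zpow_of_intCast_eq {G : Type*} [Group G] {x : G} {d n : ℕ} (hx : x ^ d = 1)
    (hd : d ∣ n) {s t : ℤ} (h : (s : ZMod n) = t) : x ^ s = x ^ t := by
  rw [zpow_eq_zpow_iff_modEq]
  exact ((ZMod.intCast_eq_intCast_iff _ _ _).1 h).of_dvd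
    (by exact_mod_cast (orderOf_dvd_of_pow_eq_one hx).trans hd)

universe u

theorem every_group_quasiBurnside_iff_vonDyck (k l m : ℕ) (hk : 2 ≤ k) (hl : 2 ≤ l)
    (hm : 2 ≤ m) (r : (ZMod (Nat.lcm k (Nat.lcm l m)))ˣ) (ρ : ℤ)
    (hρ : (ρ : ZMod (Nat.lcm k (Nat.lcm l m))) = (r : ZMod (Nat.lcm k (Nat.lcm l m)))) :
    (∀ (G : Type u) [Group G], IsQuasiBurnsideWith k l m (Nat.lcm k (Nat.lcm l m)) r G) ↔
      ∃ g h : VonDyck k l m,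
        VonDyck.a k l m ^ ρ *
            (g * ((VonDyck.a k l m)⁻¹ * VonDyck.c k l m) ^ ρ * g⁻¹) =
          h * VonDyck.c k l m ^ ρ * h⁻¹ := by
  constructor
  · intro H
    -- `VonDyck k l m` lives in `Type`, so the hypothesis is applied to its lift to universe `u`.
    let e : ULift.{u} (VonDyck k l m) ≃* VonDyck k l m := MulEquiv.ulift
    obtain ⟨x', y', z', hxyz, hx, hy, hz⟩ := H (ULift.{u} (VonDyck k l m)) ρ hρ
      (e.symm (VonDyck.a k l m)) (e.symm ((VonDyck.a k l m)⁻¹ * VonDyck.c k l m))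
      (e.symm (VonDyck.c k l m)) (by rw [← map_mul, mul_inv_cancel_left])
      (by rw [← map_pow, VonDyck.a_pow, map_one])
      (by rw [← map_pow, VonDyck.ac_pow, map_one])
      (by rw [← map_pow, VonDyck.c_pow, map_one])
    obtain ⟨p, hp⟩ := isConj_iff.1 hx
    obtain ⟨q, hq⟩ := isConj_iff.1 hy
    obtain ⟨s, hs⟩ := isConj_iff.1 hz
    rw [← hp, ← hq, ← hs] at hxyz
    have key := congrArg e hxyz
    simp only [map_mul, map_zpow, map_inv, MulEquiv.apply_symm_apply] at key
    refine ⟨(e p)⁻¹ * e q, (e p)⁻¹ * e s, ?_⟩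
    -- Conjugating `key` by `p⁻¹` makes the conjugator of `a ^ ρ` trivial.
    have key' := congrArg (fun t => (e p)⁻¹ * t * e p) key
    simpa only [mul_inv_rev, inv_inv, mul_assoc, inv_mul_cancel_left] using key'
  · rintro ⟨g, h, hgh⟩ G _ ρ' hρ' x y z hxyz hx hy hz
    have hy' : x⁻¹ * z = y := by rw [← hxyz, inv_mul_cancel_left]
    obtain ⟨f, hfa, hfc⟩ := VonDyck.exists_hom hx (by rwa [hy']) hz
    have key := congrArg f hgh
    simp only [map_mul, map_zpow, map_inv, hfa, hfc, hy'] at key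
    have hc := hρ'.trans hρ.symm
    rw [zpow_eq_zpow_of_intCast_eq hx (Nat.dvd_lcm_left _ _) hc,
      zpow_eq_zpow_of_intCast_eq hy ((Nat.dvd_lcm_left _ _).trans (Nat.dvd_lcm_right _ _)) hc,
      zpow_eq_zpow_of_intCast_eq hz ((Nat.dvd_lcm_right _ _).trans (Nat.dvd_lcm_right _ _)) hc]
    exact ⟨_, _, _, key, IsConj.refl _, isConj_iff.2 ⟨f g, rfl⟩, isConj_iff.2 ⟨f h, rfl⟩⟩
end

section
/- Let k, l, m ≥ 2 be integers. Then M_{PSL₂(ℝ)} = M, where M = {r ∈ (ℤ/lcm(k,l,m)ℤ)* : r · (H ∩ (S ∪ -S)) = H ∩ (S ∪ -S)}, H is the subgroup (1/k ℤ/ℤ) ⊕ (1/l ℤ/ℤ) ⊕ (1/m ℤ/ℤ) of (ℝ/ℤ)³, and S is the image in (ℝ/ℤ)³ of {(x,y,z) ∈ ℝ³ : x > 0, y > 0, z > 0, x + y + z < 1}. -/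
/-!
Nontrivial torsion in `PSL₂(ℝ)` is elliptic, so its conjugacy classes are the classes of rotations
by `πx` with `x ∈ ℝ/ℤ` nonzero (`exists_isConj_rotP`), and the `ρ`-th power of the class of `x` is
the class of `ρx` (`image_zpow_rotClass`). Thus `B_G` is the image of a set of triples in `H` with
nonzero coordinates (`rotClass_mem_BSet_iff`).

To find this set, take representatives `x, y, z ∈ (0, 1)` and lift to `SL₂(ℝ)`. If `A, B` are
conjugate to the rotations by `a, b ∈ (0, π)`, then `tr (A B) ≤ 2 cos (a + b)`
(`PosElliptic.trace_mul_le`), and every trace up to this bound occurs. Applied to `A B` and `B C`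
with `A B C = ±1`, this shows that the classes of `x, y, z` contain elements with product `1` exactly
when `x + y + z ≤ 1` or `x + y + z ≥ 2` (`productOne_iff`). Strict inequality describes `S ∪ -S`,
and equality describes the triples with `x + y + z = 0` in `ℝ/ℤ`
(`productOne_iff_of_nonzeroCoords`).

Multiplication by a unit `r` is a bijection of `H` which preserves, in both directions, the
vanishing of `x + y + z` and the nonvanishing of the coordinates. Hence `r` maps the triples of
`B_G` into themselves if and only if it maps `H ∩ (S ∪ -S)` into itself, and as `H` is finite,
the latter means that it maps `H ∩ (S ∪ -S)` onto itself.
-/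

open scoped MatrixGroups

/-- `C` is a conjugacy class of `G`. -/
def IsConjClass {G : Type*} [Group G] (C : Set G) : Prop :=
  ∃ x : G, C = {y | IsConj x y}

/-- The set `B_G` of triples `(C,D,E)` of conjugacy classes of `G` with `1 ∈ CDE`,
`C ⊆ G[k]⁰`, `D ⊆ G[l]⁰`, `E ⊆ G[m]⁰`. -/
def BSet (k l m : ℕ) (G : Type*) [Group G] : Set (Set G × Set G × Set G) :=
  {T | IsConjClass T.1 ∧ IsConjClass T.2.1 ∧ IsConjClass T.2.2 ∧
    (∃ c ∈ T.1, ∃ d ∈ T.2.1, ∃ e ∈ T.2.2, c * d * e = 1) ∧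
    T.1 ⊆ {g | g ^ k = 1 ∧ g ≠ 1} ∧
    T.2.1 ⊆ {g | g ^ l = 1 ∧ g ≠ 1} ∧
    T.2.2 ⊆ {g | g ^ m = 1 ∧ g ≠ 1}}

/-- The set `M_G` of units `r` of `ℤ/lcm(k,l,m)ℤ` such that `(C^r, D^r, E^r) ∈ B_G`
for every `(C,D,E) ∈ B_G`. -/
def MSet (k l m n : ℕ) (G : Type*) [Group G] : Set (ZMod n)ˣ :=
  {r | ∀ ρ : ℤ, ((ρ : ZMod n) = (r : ZMod n)) → ∀ T ∈ BSet k l m G,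
    ((fun c => c ^ ρ) '' T.1, (fun d => d ^ ρ) '' T.2.1, (fun e => e ^ ρ) '' T.2.2)
      ∈ BSet k l m G}

/-- The subgroup `H = (1/k ℤ/ℤ) ⊕ (1/l ℤ/ℤ) ⊕ (1/m ℤ/ℤ)` of `(ℝ/ℤ)³`, i.e. the set
of triples whose coordinates are killed by `k`, `l`, `m` respectively. -/
def Hset (k l m : ℕ) : Set (AddCircle (1 : ℝ) × AddCircle (1 : ℝ) × AddCircle (1 : ℝ)) :=
  {v | k • v.1 = 0 ∧ l • v.2.1 = 0 ∧ m • v.2.2 = 0}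

/-- The image `S` in `(ℝ/ℤ)³` of the open simplex
`{(x,y,z) ∈ ℝ³ : x > 0, y > 0, z > 0, x + y + z < 1}`. -/
def Sset : Set (AddCircle (1 : ℝ) × AddCircle (1 : ℝ) × AddCircle (1 : ℝ)) :=
  (fun p : ℝ × ℝ × ℝ =>
      ((p.1 : AddCircle (1 : ℝ)), (p.2.1 : AddCircle (1 : ℝ)), (p.2.2 : AddCircle (1 : ℝ)))) ''
    {p : ℝ × ℝ × ℝ | 0 < p.1 ∧ 0 < p.2.1 ∧ 0 < p.2.2 ∧ p.1 + p.2.1 + p.2.2 < 1}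


open Real

/-! ### Elliptic elements of `SL₂(ℝ)` -/

/-- The rotation matrix `(cos a, sin a; -sin a, cos a)` as an element of `SL₂(ℝ)`. -/
noncomputable def rotSL (a : ℝ) : SL(2, ℝ) :=
  ⟨!![cos a, sin a; -sin a, cos a], by
    rw [Matrix.det_fin_two_of]; nlinarith [sin_sq_add_cos_sq a]⟩

/-- For `0 < a < π` these are exactly the `SL₂(ℝ)`-conjugates of `rotSL a`: the trace is
`2 cos a`, and the sign of the upper right entry tells `rotSL a` from its inverse. -/
def PosElliptic (a : ℝ) (A : SL(2, ℝ)) : Prop :=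
  0 < A 0 1 ∧ A 0 0 + A 1 1 = 2 * cos a

lemma det_entries (A : SL(2, ℝ)) : A 0 0 * A 1 1 - A 0 1 * A 1 0 = 1 := by
  have := A.det_coe
  rwa [Matrix.det_fin_two] at this

lemma sl2_ext {A B : SL(2, ℝ)} (h00 : A 0 0 = B 0 0) (h01 : A 0 1 = B 0 1)
    (h10 : A 1 0 = B 1 0) (h11 : A 1 1 = B 1 1) : A = B := by
  ext i j
  fin_cases i <;> fin_cases j <;> assumption

lemma mul_entries (A B : SL(2, ℝ)) (i j : Fin 2) :
    (A * B) i j = A i 0 * B 0 j + A i 1 * B 1 j := by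
  simp [Matrix.mul_apply, Fin.sum_univ_two]

lemma inv_entries (A : SL(2, ℝ)) : A⁻¹ 0 0 = A 1 1 ∧ A⁻¹ 0 1 = -A 0 1 ∧
    A⁻¹ 1 0 = -A 1 0 ∧ A⁻¹ 1 1 = A 0 0 := by
  simp [Matrix.adjugate_fin_two]

lemma neg_entries (A : SL(2, ℝ)) (i j : Fin 2) : (-A) i j = -A i j := by
  simp

lemma rotSL_entries (a : ℝ) : rotSL a 0 0 = cos a ∧ rotSL a 0 1 = sin a ∧
    rotSL a 1 0 = -sin a ∧ rotSL a 1 1 = cos a := by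
  simp [rotSL]

lemma rotSL_add (a b : ℝ) : rotSL (a + b) = rotSL a * rotSL b := by
  obtain ⟨h1, h2, h3, h4⟩ := rotSL_entries a
  obtain ⟨k1, k2, k3, k4⟩ := rotSL_entries b
  obtain ⟨l1, l2, l3, l4⟩ := rotSL_entries (a + b)
  apply sl2_ext <;> rw [mul_entries] <;>
    simp only [h1, h2, h3, h4, k1, k2, k3, k4, l1, l2, l3, l4, cos_add, sin_add] <;> ring

lemma rotSL_zero : rotSL 0 = 1 := by
  ext i j
  fin_cases i <;> fin_cases j <;> simp [rotSL]

/-- Conjugates of `rotSL a` have positive upper right entry: it equals `(p² + q²) sin a`, where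
`(p, q)` is the first row of the conjugating matrix. -/
lemma posElliptic_conj_rotSL {a : ℝ} (h0 : 0 < a) (hp : a < π) (P : SL(2, ℝ)) :
    PosElliptic a (P * rotSL a * P⁻¹) := by
  obtain ⟨h1, h2, h3, h4⟩ := rotSL_entries a
  obtain ⟨k1, k2, k3, k4⟩ := inv_entries P
  have hd := det_entries P
  have hs := sin_pos_of_pos_of_lt_pi h0 hp
  constructor
  · have : (P * rotSL a * P⁻¹) 0 1 = (P 0 0 ^ 2 + P 0 1 ^ 2) * sin a := by
      simp only [mul_entries, h1, h2, h3, h4, k2, k4]; ring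
    rw [this]
    refine mul_pos ?_ hs
    by_contra hn
    have e0 : P 0 0 = 0 := by nlinarith [sq_nonneg (P 0 0), sq_nonneg (P 0 1)]
    have e1 : P 0 1 = 0 := by nlinarith [sq_nonneg (P 0 0), sq_nonneg (P 0 1)]
    rw [e0, e1] at hd
    norm_num at hd
  · simp only [mul_entries, h1, h2, h3, h4, k1, k2, k3, k4]
    linear_combination (2 * cos a) * hd

lemma PosElliptic.exists_conj {a : ℝ} (h0 : 0 < a) (hp : a < π) {A : SL(2, ℝ)}
    (hA : PosElliptic a A) : ∃ P : SL(2, ℝ), A = P * rotSL a * P⁻¹ := by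
  obtain ⟨h1, h2, h3, h4⟩ := rotSL_entries a
  have hs := sin_pos_of_pos_of_lt_pi h0 hp
  obtain ⟨hq, ht⟩ := hA
  have hd := det_entries A
  have hsc := sin_sq_add_cos_sq a
  set q := A 0 1
  set t := A 1 1
  set μ := √(sin a / q) with hμ
  have hμ2 : μ ^ 2 = sin a / q := sq_sqrt (by positivity)
  -- The relation `A P = P R(a)` says that the columns `v, w` of `P` satisfy
  -- `A v = cos a • v - sin a • w`; take `v = (0, μ)` and choose `μ` so that `det P = 1`.
  let P : SL(2, ℝ) := ⟨!![0, -(μ * q / sin a); μ, μ * (cos a - t) / sin a], by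
    rw [Matrix.det_fin_two_of]
    have : 0 * (μ * (cos a - t) / sin a) - -(μ * q / sin a) * μ = μ ^ 2 * (q / sin a) := by ring
    rw [this, hμ2]
    field_simp⟩
  have p1 : P 0 0 = 0 := rfl
  have p2 : P 0 1 = -(μ * q / sin a) := rfl
  have p3 : P 1 0 = μ := rfl
  have p4 : P 1 1 = μ * (cos a - t) / sin a := rfl
  -- It remains to check the intertwining relation `A * P = P * rotSL a`.
  refine ⟨P, eq_mul_inv_of_mul_eq ?_⟩
  have e0 : A 0 0 = 2 * cos a - t := by linarith
  have e1 : A 1 0 * q = (2 * cos a - t) * t - 1 := by rw [← e0]; linarith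
  apply sl2_ext <;> rw [mul_entries, mul_entries] <;>
    simp only [h1, h2, h3, h4, p1, p2, p3, p4, e0]
  · change _ + q * μ = _
    field_simp; ring
  · change _ + q * _ = _
    field_simp; ring
  · change _ + t * μ = _
    field_simp; ring
  · change _ + t * _ = _
    field_simp
    linear_combination (-μ) * e1 - μ * hsc

/-- The key trace inequality. Writing the diagonals as `cos a ± u`, `cos b ± v` and the
off-diagonal entries as `q, -s` and `q', -s'`, one has `q s = sin² a + u²`, `q' s' = sin² b + v²`,
so AM-GM and Cauchy-Schwarz give `q s' + s q' ≥ 2 (sin a sin b + u v)`. -/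
lemma PosElliptic.trace_mul_le {a b : ℝ} {A B : SL(2, ℝ)} (ha : 0 < sin a) (hb : 0 < sin b)
    (hA : PosElliptic a A) (hB : PosElliptic b B) :
    (A * B) 0 0 + (A * B) 1 1 ≤ 2 * cos (a + b) := by
  obtain ⟨hq, ht⟩ := hA
  obtain ⟨hq', ht'⟩ := hB
  have hd := det_entries A
  have hd' := det_entries B
  have hsc := sin_sq_add_cos_sq a
  have hsc' := sin_sq_add_cos_sq b
  rw [mul_entries, mul_entries, cos_add]
  obtain ⟨u, hu⟩ : ∃ u, u = A 0 0 - cos a := ⟨_, rfl⟩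
  obtain ⟨v, hv⟩ : ∃ v, v = B 0 0 - cos b := ⟨_, rfl⟩
  have a0 : A 0 0 = cos a + u := by linarith
  have a1 : A 1 1 = cos a - u := by linarith
  have b0 : B 0 0 = cos b + v := by linarith
  have b1 : B 1 1 = cos b - v := by linarith
  obtain ⟨s, hs⟩ : ∃ s, s = -A 1 0 := ⟨_, rfl⟩
  obtain ⟨s', hs'⟩ : ∃ s, s = -B 1 0 := ⟨_, rfl⟩
  have a2 : A 1 0 = -s := by linarith
  have b2 : B 1 0 = -s' := by linarith
  rw [a0, a1, a2] at hd
  rw [b0, b1, b2] at hd'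
  rw [a0, a1, b0, b1, a2, b2]
  set q := A 0 1
  set q' := B 0 1
  have e : q * s = sin a ^ 2 + u ^ 2 := by linarith
  have e' : q' * s' = sin b ^ 2 + v ^ 2 := by linarith
  have hs0 : 0 < s := by
    have : 0 < q * s := by rw [e]; positivity
    exact (pos_iff_pos_of_mul_pos this).1 hq
  have hs0' : 0 < s' := by
    have : 0 < q' * s' := by rw [e']; positivity
    exact (pos_iff_pos_of_mul_pos this).1 hq'
  have key : 2 * (sin a * sin b + u * v) ≤ q * s' + s * q' := by
    apply le_of_sq_le_sq _ (by positivity)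
    have h4 : 4 * (q * s) * (q' * s') ≤ (q * s' + s * q') ^ 2 := by
      nlinarith [sq_nonneg (q * s' - s * q')]
    rw [e, e'] at h4
    nlinarith [sq_nonneg (sin a * v - sin b * u)]
  linarith

lemma cos_le_cases {s c : ℝ} (hc : 0 < c)
    (h : cos c ≤ cos s) : s ≤ c ∨ 2 * π - c ≤ s := by
  by_contra! hn
  obtain ⟨h1, h2⟩ := hn
  rcases le_total s π with h3 | h3
  · have := cos_lt_cos_of_nonneg_of_le_pi hc.le h3 h1
    linarith
  · have := cos_lt_cos_of_nonneg_of_le_pi hc.le (by linarith : 2 * π - s ≤ π) (by linarith)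
    rw [cos_two_pi_sub] at this
    linarith

/-- The trace inequality for `A B = C⁻¹` gives `a + b ≤ c` or `a + b + c ≥ 2π`, and likewise for
`B C = A⁻¹`; the two first alternatives contradict each other since `b > 0`. -/
lemma PosElliptic.sum_of_mul_eq_one {a b c : ℝ} (ha : 0 < a) (ha' : a < π) (hb : 0 < b)
    (hb' : b < π) (hc : 0 < c) (hc' : c < π) {A B C : SL(2, ℝ)} (hA : PosElliptic a A)
    (hB : PosElliptic b B) (hC : PosElliptic c C) (h : A * B * C = 1) :
    2 * π ≤ a + b + c := by
  have hsa := sin_pos_of_pos_of_lt_pi ha ha'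
  have hsb := sin_pos_of_pos_of_lt_pi hb hb'
  have hsc := sin_pos_of_pos_of_lt_pi hc hc'
  have h1 := hA.trace_mul_le hsa hsb hB
  have h2 := hB.trace_mul_le hsb hsc hC
  have e1 : A * B = C⁻¹ := eq_inv_of_mul_eq_one_left h
  have e2 : B * C = A⁻¹ := eq_inv_of_mul_eq_one_right (by rw [← mul_assoc, h])
  rw [e1, (inv_entries C).1, (inv_entries C).2.2.2, add_comm, hC.2] at h1
  rw [e2, (inv_entries A).1, (inv_entries A).2.2.2, add_comm, hA.2] at h2
  have c1 := cos_le_cases (s := a + b) (c := c) hc (by linarith)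
  have c2 := cos_le_cases (s := b + c) (c := a) ha (by linarith)
  rcases c1 with c1 | c1 <;> rcases c2 with c2 | c2 <;> linarith

/-- Here the trace inequality gives `a + b + c ≤ π` or `a + b ≥ π + c`, and likewise for `B C`; the
two second alternatives contradict each other since `b < π`. -/
lemma PosElliptic.sum_of_mul_eq_neg_one {a b c : ℝ} (ha : 0 < a) (ha' : a < π) (hb : 0 < b)
    (hb' : b < π) (hc : 0 < c) (hc' : c < π) {A B C : SL(2, ℝ)} (hA : PosElliptic a A)
    (hB : PosElliptic b B) (hC : PosElliptic c C) (h : A * B * C = -1) :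
    a + b + c ≤ π := by
  have hsa := sin_pos_of_pos_of_lt_pi ha ha'
  have hsb := sin_pos_of_pos_of_lt_pi hb hb'
  have hsc := sin_pos_of_pos_of_lt_pi hc hc'
  have h1 := hA.trace_mul_le hsa hsb hB
  have h2 := hB.trace_mul_le hsb hsc hC
  have e1 : A * B = -C⁻¹ := by rw [eq_mul_inv_of_mul_eq h, neg_mul, one_mul]
  have e2 : B * C = -A⁻¹ := by
    rw [eq_inv_mul_of_mul_eq (a := B * C) (by rw [← mul_assoc, h]), mul_neg, mul_one]
  rw [e1, neg_entries, neg_entries, (inv_entries C).1, (inv_entries C).2.2.2] at h1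
  rw [e2, neg_entries, neg_entries, (inv_entries A).1, (inv_entries A).2.2.2] at h2
  have c1 := cos_le_cases (s := a + b) (c := π - c) (by linarith)
    (by rw [cos_pi_sub]; linarith [hC.2])
  have c2 := cos_le_cases (s := b + c) (c := π - a) (by linarith)
    (by rw [cos_pi_sub]; linarith [hA.2])
  rcases c1 with c1 | c1 <;> rcases c2 with c2 | c2 <;> linarith

lemma PosElliptic.neg_of_neg {c : ℝ} {C : SL(2, ℝ)} (h : C 0 1 < 0)
    (ht : C 0 0 + C 1 1 = 2 * cos c) : PosElliptic (π - c) (-C) := by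
  refine ⟨?_, ?_⟩
  · rw [neg_entries]; linarith
  · rw [neg_entries, neg_entries, cos_pi_sub]; linarith

lemma PosElliptic.neg_inv {c : ℝ} {C : SL(2, ℝ)} (h : PosElliptic c C) :
    PosElliptic (π - c) (-C⁻¹) := by
  obtain ⟨h1, h2, h3, h4⟩ := inv_entries C
  exact .neg_of_neg (by rw [h2]; linarith [h.1]) (by rw [h1, h4]; linarith [h.2])

lemma entry_ne_zero_of_trace {c : ℝ} (hs : 0 < sin c) {C : SL(2, ℝ)}
    (ht : C 0 0 + C 1 1 = 2 * cos c) : C 0 1 ≠ 0 := by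
  intro h0
  have hd := det_entries C
  rw [h0] at hd
  have hsc := sin_sq_add_cos_sq c
  have e : (C 0 0 + C 1 1) ^ 2 = (2 * cos c) ^ 2 := by rw [ht]
  nlinarith [sq_nonneg (C 0 0 - C 1 1), sq_pos_of_pos hs]

/-- Conjugating `rotSL b` by a diagonal matrix realizes every trace of `A B` that is at most
`2 cos (a + b)`, in particular `-2 cos c`; then take `C = -(A B)⁻¹`. -/
lemma exists_mul_eq_neg_one {a b c : ℝ} (ha : 0 < a) (hb : 0 < b) (hc : 0 < c)
    (h : a + b + c ≤ π) : ∃ A B C : SL(2, ℝ), PosElliptic a A ∧ PosElliptic b B ∧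
      PosElliptic c C ∧ A * B * C = -1 := by
  have hsa := sin_pos_of_pos_of_lt_pi ha (by linarith)
  have hsb := sin_pos_of_pos_of_lt_pi hb (by linarith)
  have hsc := sin_pos_of_pos_of_lt_pi hc (by linarith)
  have hcos : -cos c ≤ cos (a + b) := by
    rw [← cos_pi_sub]
    exact cos_le_cos_of_nonneg_of_le_pi (by linarith) (by linarith) (by linarith)
  obtain ⟨τ, hτ⟩ : ∃ τ, τ = (2 * cos a * cos b + 2 * cos c) / (sin a * sin b) := ⟨_, rfl⟩
  have hτ2 : 2 ≤ τ := by
    rw [hτ, le_div_iff₀ (by positivity)]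
    rw [cos_add] at hcos
    linarith
  have hτ' : τ * (sin a * sin b) = 2 * cos a * cos b + 2 * cos c := by
    rw [hτ]; field_simp
  obtain ⟨x, hx, hxτ⟩ : ∃ x : ℝ, 0 < x ∧ x + x⁻¹ = τ := by
    have hr : √(τ ^ 2 - 4) ^ 2 = τ ^ 2 - 4 := sq_sqrt (by nlinarith)
    have hr0 := sqrt_nonneg (τ ^ 2 - 4)
    refine ⟨(τ + √(τ ^ 2 - 4)) / 2, by positivity, ?_⟩
    have : τ + √(τ ^ 2 - 4) ≠ 0 := by positivity
    field_simp
    linear_combination hr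
  let B : SL(2, ℝ) := ⟨!![cos b, x * sin b; -(x⁻¹ * sin b), cos b], by
    rw [Matrix.det_fin_two_of]
    field_simp
    linear_combination sin_sq_add_cos_sq b⟩
  have b1 : B 0 0 = cos b := rfl
  have b2 : B 0 1 = x * sin b := rfl
  have b3 : B 1 0 = -(x⁻¹ * sin b) := rfl
  have b4 : B 1 1 = cos b := rfl
  obtain ⟨h1, h2, h3, h4⟩ := rotSL_entries a
  have hA : PosElliptic a (rotSL a) := ⟨by rw [h2]; exact hsa, by rw [h1, h4]; ring⟩
  have hB : PosElliptic b B := ⟨by rw [b2]; positivity, by rw [b1, b4]; ring⟩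
  obtain ⟨C, hC⟩ : ∃ C, C = -(rotSL a * B)⁻¹ := ⟨_, rfl⟩
  have hprod : rotSL a * B * C = -1 := by rw [hC, mul_neg, mul_inv_cancel]
  have htr : C 0 0 + C 1 1 = 2 * cos c := by
    rw [hC, neg_entries, neg_entries, (inv_entries _).1, (inv_entries _).2.2.2, mul_entries,
      mul_entries, h1, h2, h3, h4, b1, b2, b3, b4]
    rw [← hxτ] at hτ'
    linarith
  refine ⟨rotSL a, B, C, hA, hB, ⟨?_, htr⟩, hprod⟩
  -- Were the upper right entry of `C` negative, `-C` would have angle `π - c` and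
  -- `A B (-C) = 1`, which forces `a + b ≥ π + c`.
  rcases lt_or_gt_of_ne (entry_ne_zero_of_trace hsc htr) with hneg | hpos
  · have := hA.sum_of_mul_eq_one ha (by linarith) hb (by linarith) (by linarith) (by linarith)
      hB (.neg_of_neg hneg htr) (by rw [mul_neg, hprod, neg_neg])
    linarith
  · exact hpos

/-- If `|tr A| ≥ 2`, then `A ^ (n + 1) = u A - w` with `|w| < |u|`: by Cayley-Hamilton the next
coefficients are `(u tr A - w, u)`, and `|u tr A - w| ≥ 2 |u| - |w| > |u|`. -/
lemma pow_eq_of_two_le_trace (A : SL(2, ℝ)) (h : 2 ≤ |A 0 0 + A 1 1|) (n : ℕ) :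
    ∃ u w : ℝ, |w| < |u| ∧ (A ^ (n + 1)) 0 1 = u * A 0 1 ∧ (A ^ (n + 1)) 1 0 = u * A 1 0 ∧
      (A ^ (n + 1)) 0 0 = u * A 0 0 - w ∧ (A ^ (n + 1)) 1 1 = u * A 1 1 - w := by
  induction n with
  | zero => exact ⟨1, 0, by simp⟩
  | succ n ih =>
    obtain ⟨u, w, huw, h01, h10, h00, h11⟩ := ih
    have hd := det_entries A
    refine ⟨u * (A 0 0 + A 1 1) - w, u, ?_, ?_, ?_, ?_, ?_⟩
    · have h1 := abs_sub_abs_le_abs_sub (u * (A 0 0 + A 1 1)) w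
      rw [abs_mul] at h1
      nlinarith [abs_nonneg u]
    all_goals simp only [pow_succ A (n + 1), mul_entries, h01, h10, h00, h11]
    · ring
    · ring
    · linear_combination (-u) * hd
    · linear_combination (-u) * hd

lemma eq_or_neg_of_scalar {A : SL(2, ℝ)} (h01 : A 0 1 = 0) (h10 : A 1 0 = 0)
    (h : A 0 0 = A 1 1) : A = 1 ∨ A = -1 := by
  have hd := det_entries A
  rw [h01, ← h] at hd
  rcases mul_self_eq_one_iff.1 (by linarith : A 0 0 * A 0 0 = 1) with h1 | h1
  · left; apply sl2_ext <;> simp [h01, h10, h1, ← h]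
  · right; apply sl2_ext <;> simp [h01, h10, h1, ← h]

/-- Nontrivial torsion in `PSL₂(ℝ)` is elliptic: otherwise `u A - w = ±1` with `u ≠ 0`, so `A` is
scalar. -/
lemma abs_trace_lt_two {A : SL(2, ℝ)} {n : ℕ} (hn : n ≠ 0) (hp : A ^ n = 1 ∨ A ^ n = -1)
    (h1 : A ≠ 1) (h2 : A ≠ -1) : |A 0 0 + A 1 1| < 2 := by
  by_contra! h
  obtain ⟨n, rfl⟩ := Nat.exists_eq_succ_of_ne_zero hn
  obtain ⟨u, w, huw, h01, h10, h00, h11⟩ := pow_eq_of_two_le_trace A h n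
  have hu : u ≠ 0 := abs_pos.1 ((abs_nonneg w).trans_lt huw)
  have e : (A ^ (n + 1)) 0 1 = 0 ∧ (A ^ (n + 1)) 1 0 = 0 ∧
      (A ^ (n + 1)) 0 0 = (A ^ (n + 1)) 1 1 := by
    rcases hp with hp | hp <;> rw [show A ^ (n + 1) = _ from hp] <;> simp
  obtain ⟨e1, e2, e3⟩ := e
  rw [h01] at e1
  rw [h10] at e2
  rw [h00, h11] at e3
  have := eq_or_neg_of_scalar (A := A) (by simpa [hu] using e1) (by simpa [hu] using e2)
    (mul_left_cancel₀ hu (by linarith))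
  tauto

/-! ### Rotations and conjugacy classes in `PSL₂(ℝ)` -/

lemma mem_center_iff_eq (A : SL(2, ℝ)) :
    A ∈ Subgroup.center SL(2, ℝ) ↔ A = 1 ∨ A = -1 := by
  constructor
  · intro h
    obtain ⟨r, -, hr⟩ := Matrix.SpecialLinearGroup.mem_center_iff.1 h
    have h' : ∀ i j, A i j = Matrix.scalar (Fin 2) r i j := fun i j => by rw [hr]
    apply eq_or_neg_of_scalar <;> simp [h']
  · rintro (rfl | rfl)
    · exact one_mem _
    · rw [Subgroup.mem_center_iff]
      intro g; simp

lemma mk_eq_one_iff (A : SL(2, ℝ)) : (A : PSL(2, ℝ)) = 1 ↔ A = 1 ∨ A = -1 := by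
  rw [QuotientGroup.eq_one_iff, mem_center_iff_eq]

lemma psl_mk_neg (A : SL(2, ℝ)) : ((-A : SL(2, ℝ)) : PSL(2, ℝ)) = (A : PSL(2, ℝ)) := by
  have h : ((-1 : SL(2, ℝ)) : PSL(2, ℝ)) = 1 := (mk_eq_one_iff _).2 (Or.inr rfl)
  rw [← neg_one_mul, QuotientGroup.mk_mul, h, one_mul]

lemma rotSL_pi : rotSL π = -1 := by
  ext i j
  fin_cases i <;> fin_cases j <;> simp [rotSL]

/-- The homomorphism `ℝ → PSL₂(ℝ)` sending `x` to the class of the rotation by `πx`. -/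
noncomputable def rotReal : ℝ →+ Additive PSL(2, ℝ) where
  toFun x := Additive.ofMul (rotSL (π * x) : PSL(2, ℝ))
  map_zero' := by simp [rotSL_zero]
  map_add' x y := by simp [mul_add, rotSL_add]

/-- The homomorphism `ℝ/ℤ → PSL₂(ℝ)` induced by `rotReal`. -/
noncomputable def rotHom : AddCircle (1 : ℝ) →+ Additive PSL(2, ℝ) :=
  QuotientAddGroup.lift _ rotReal (by
    rw [AddSubgroup.zmultiples_le, AddMonoidHom.mem_ker]
    change Additive.ofMul (rotSL (π * 1) : PSL(2, ℝ)) = 0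
    rw [mul_one, (mk_eq_one_iff _).2 (Or.inr rotSL_pi), ofMul_one])

/-- The rotation in `PSL₂(ℝ)` with parameter `θ ∈ ℝ/ℤ`: the class of `rotSL (πx)` for `θ = x mod ℤ`. -/
noncomputable def rotP (θ : AddCircle (1 : ℝ)) : PSL(2, ℝ) := (rotHom θ).toMul

lemma rotP_coe (x : ℝ) : rotP (x : AddCircle (1 : ℝ)) = (rotSL (π * x) : PSL(2, ℝ)) := rfl

lemma rotP_zpow (θ : AddCircle (1 : ℝ)) (n : ℤ) : rotP θ ^ n = rotP (n • θ) := by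
  simp [rotP]

lemma rotP_pow (θ : AddCircle (1 : ℝ)) (n : ℕ) : rotP θ ^ n = rotP (n • θ) := by
  simp [rotP]

lemma coe_eq_coe {x y : ℝ} : (x : AddCircle (1 : ℝ)) = y ↔ ∃ n : ℤ, x = y + n := by
  rw [← sub_eq_zero, ← AddCircle.coe_sub, AddCircle.coe_eq_zero_iff]
  simp only [zsmul_eq_mul, mul_one]
  exact ⟨fun ⟨n, hn⟩ => ⟨n, by linarith⟩, fun ⟨n, hn⟩ => ⟨n, by linarith⟩⟩

/-- Every nonzero point of `ℝ/ℤ` has a representative in the open unit interval. -/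
lemma exists_rep {θ : AddCircle (1 : ℝ)} (h : θ ≠ 0) :
    ∃ x : ℝ, 0 < x ∧ x < 1 ∧ θ = (x : AddCircle (1 : ℝ)) := by
  induction θ using QuotientAddGroup.induction_on with
  | H y =>
    have hy : (y : AddCircle (1 : ℝ)) = (Int.fract y : ℝ) :=
      coe_eq_coe.2 ⟨⌊y⌋, (Int.fract_add_floor y).symm⟩
    refine ⟨Int.fract y, lt_of_le_of_ne (Int.fract_nonneg y) fun h0 => h ?_,
      Int.fract_lt_one y, hy⟩
    exact hy.trans (by rw [← h0, AddCircle.coe_zero])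

lemma rotP_eq_one_iff (θ : AddCircle (1 : ℝ)) : rotP θ = 1 ↔ θ = 0 := by
  refine ⟨fun h => ?_, by rintro rfl; simp [rotP]⟩
  by_contra h0
  obtain ⟨x, hx, hx1, rfl⟩ := exists_rep h0
  rw [rotP_coe, mk_eq_one_iff] at h
  have hs : 0 < sin (π * x) := sin_pos_of_pos_of_lt_pi (by positivity) (by nlinarith [pi_pos])
  have h2 := (rotSL_entries (π * x)).2.1
  rcases h with h | h <;> rw [h] at h2 <;> simp at h2 <;> linarith

lemma isConj_rotP_iff {x : ℝ} (hx : 0 < x) (hx1 : x < 1) (g : PSL(2, ℝ)) :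
    IsConj (rotP x) g ↔ ∃ A : SL(2, ℝ), (A : PSL(2, ℝ)) = g ∧ PosElliptic (π * x) A := by
  have h0 : 0 < π * x := by positivity
  have h1 : π * x < π := by nlinarith [pi_pos]
  rw [isConj_iff, rotP_coe]
  constructor
  · rintro ⟨h, rfl⟩
    induction h using QuotientGroup.induction_on with
    | H P => exact ⟨P * rotSL (π * x) * P⁻¹, by simp, posElliptic_conj_rotSL h0 h1 P⟩
  · rintro ⟨A, rfl, hA⟩
    obtain ⟨P, rfl⟩ := hA.exists_conj h0 h1
    exact ⟨P, by simp⟩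

/-- Every nontrivial torsion element of `PSL₂(ℝ)` is conjugate to a rotation. -/
lemma exists_isConj_rotP {k : ℕ} (hk : k ≠ 0) {g : PSL(2, ℝ)} (hg : g ^ k = 1) (h1 : g ≠ 1) :
    ∃ θ, IsConj (rotP θ) g := by
  induction g using QuotientGroup.induction_on with
  | H A =>
    rw [← QuotientGroup.mk_pow, mk_eq_one_iff] at hg
    rw [Ne, mk_eq_one_iff, not_or] at h1
    have ht := abs_lt.1 (abs_trace_lt_two hk hg h1.1 h1.2)
    obtain ⟨a, ha⟩ : ∃ a, a = arccos ((A 0 0 + A 1 1) / 2) := ⟨_, rfl⟩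
    have hcos : A 0 0 + A 1 1 = 2 * cos a := by
      rw [ha, cos_arccos (by linarith) (by linarith)]; ring
    have ha0 : 0 < a := by rw [ha, arccos_pos]; linarith
    have haπ : a < π := by rw [ha, arccos_lt_pi]; linarith
    have hpi := pi_pos
    rcases lt_or_gt_of_ne (entry_ne_zero_of_trace (sin_pos_of_pos_of_lt_pi ha0 haπ) hcos)
      with hneg | hpos
    · refine ⟨((π - a) / π : ℝ), (isConj_rotP_iff (div_pos (by linarith) hpi) ?_ _).2 ⟨-A, psl_mk_neg A, ?_⟩⟩
      · rw [div_lt_one hpi]; linarith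
      · rw [mul_div_cancel₀ _ hpi.ne']
        exact .neg_of_neg hneg hcos
    · refine ⟨(a / π : ℝ), (isConj_rotP_iff (div_pos ha0 hpi) ?_ _).2 ⟨A, rfl, ?_⟩⟩
      · rwa [div_lt_one hpi]
      · rw [mul_div_cancel₀ _ hpi.ne']
        exact ⟨hpos, hcos⟩

/-! ### Triples of rotation classes with product one -/

/-- The conjugacy classes of the rotations with parameters `v` contain elements with product `1`. -/
def ProductOne (v : AddCircle (1 : ℝ) × AddCircle (1 : ℝ) × AddCircle (1 : ℝ)) : Prop :=
  ∃ c d e : PSL(2, ℝ), IsConj (rotP v.1) c ∧ IsConj (rotP v.2.1) d ∧ IsConj (rotP v.2.2) e ∧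
    c * d * e = 1

lemma exists_mul_eq_one_psl {x y z : ℝ} (hx : 0 < x) (hy : 0 < y) (hz : 0 < z)
    (h : x + y + z ≤ 1) : ∃ A B C : SL(2, ℝ), PosElliptic (π * x) A ∧ PosElliptic (π * y) B ∧
      PosElliptic (π * z) C ∧ (A * B * C : PSL(2, ℝ)) = 1 := by
  have hpi := pi_pos
  obtain ⟨A, B, C, hA, hB, hC, hp⟩ := exists_mul_eq_neg_one (a := π * x) (b := π * y)
    (c := π * z) (by positivity) (by positivity) (by positivity) (by nlinarith)
  refine ⟨A, B, C, hA, hB, hC, ?_⟩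
  rw [← QuotientGroup.mk_mul, ← QuotientGroup.mk_mul, mk_eq_one_iff]
  exact Or.inr hp

lemma productOne_iff {x y z : ℝ} (hx : 0 < x) (hx1 : x < 1) (hy : 0 < y) (hy1 : y < 1)
    (hz : 0 < z) (hz1 : z < 1) :
    ProductOne (x, y, z) ↔ x + y + z ≤ 1 ∨ 2 ≤ x + y + z := by
  have hpi := pi_pos
  simp only [ProductOne, isConj_rotP_iff hx hx1, isConj_rotP_iff hy hy1, isConj_rotP_iff hz hz1]
  constructor
  · rintro ⟨_, _, _, ⟨A, rfl, hA⟩, ⟨B, rfl, hB⟩, ⟨C, rfl, hC⟩, h⟩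
    rw [← QuotientGroup.mk_mul, ← QuotientGroup.mk_mul, mk_eq_one_iff] at h
    rcases h with h | h
    · right
      have := hA.sum_of_mul_eq_one (by positivity) (by nlinarith) (by positivity) (by nlinarith)
        (by positivity) (by nlinarith) hB hC h
      nlinarith
    · left
      have := hA.sum_of_mul_eq_neg_one (by positivity) (by nlinarith) (by positivity)
        (by nlinarith) (by positivity) (by nlinarith) hB hC h
      nlinarith
  · rintro (h | h)
    · obtain ⟨A, B, C, hA, hB, hC, hp⟩ := exists_mul_eq_one_psl hx hy hz h
      exact ⟨A, B, C, ⟨A, rfl, hA⟩, ⟨B, rfl, hB⟩, ⟨C, rfl, hC⟩, hp⟩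
    -- Inversion turns angles `t` into `1 - t` and reverses the order of the product.
    · obtain ⟨C, B, A, hC, hB, hA, hp⟩ := exists_mul_eq_one_psl (x := 1 - z) (y := 1 - y)
        (z := 1 - x) (by linarith) (by linarith) (by linarith) (by linarith)
      have aux : ∀ {t : ℝ} {D : SL(2, ℝ)}, PosElliptic (π * (1 - t)) D →
          ∃ E : SL(2, ℝ), (E : PSL(2, ℝ)) = (D : PSL(2, ℝ))⁻¹ ∧ PosElliptic (π * t) E := by
        intro t D hD
        refine ⟨-D⁻¹, by rw [psl_mk_neg, QuotientGroup.mk_inv], ?_⟩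
        have := hD.neg_inv
        rwa [show π - π * (1 - t) = π * t by ring] at this
      refine ⟨_, _, _, aux hA, aux hB, aux hC, ?_⟩
      rw [← mul_inv_rev, ← mul_inv_rev, ← mul_assoc, hp, inv_one]

/-- All three coordinates are nonzero. -/
def NonzeroCoords (v : AddCircle (1 : ℝ) × AddCircle (1 : ℝ) × AddCircle (1 : ℝ)) : Prop :=
  v.1 ≠ 0 ∧ v.2.1 ≠ 0 ∧ v.2.2 ≠ 0

lemma coe_inj_unit {x y : ℝ} (hx : 0 < x) (hx1 : x < 1) (hy : 0 < y) (hy1 : y < 1)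
    (h : (x : AddCircle (1 : ℝ)) = y) : x = y := by
  obtain ⟨n, hn⟩ := coe_eq_coe.1 h
  have h1 : (n : ℝ) < 1 := by linarith
  have h2 : (-1 : ℝ) < n := by linarith
  have : n = 0 := by
    have h1' : n < 1 := by exact_mod_cast h1
    have h2' : -1 < n := by exact_mod_cast h2
    omega
  simp [hn, this]

lemma coe_mem_Sset_iff {x y z : ℝ} (hx : 0 < x) (hx1 : x < 1) (hy : 0 < y) (hy1 : y < 1)
    (hz : 0 < z) (hz1 : z < 1) :
    ((x : AddCircle (1 : ℝ)), (y : AddCircle (1 : ℝ)), (z : AddCircle (1 : ℝ))) ∈ Sset ↔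
      x + y + z < 1 := by
  constructor
  · rintro ⟨⟨a, b, c⟩, ⟨ha, hb, hc, hs⟩, h⟩
    simp only [Prod.mk.injEq] at h ha hb hc hs
    obtain ⟨h1, h2, h3⟩ := h
    have e1 := coe_inj_unit ha (by linarith) hx hx1 h1
    have e2 := coe_inj_unit hb (by linarith) hy hy1 h2
    have e3 := coe_inj_unit hc (by linarith) hz hz1 h3
    linarith
  · intro h
    exact ⟨(x, y, z), ⟨hx, hy, hz, h⟩, rfl⟩

lemma coe_one_sub (x : ℝ) : ((1 - x : ℝ) : AddCircle (1 : ℝ)) = -(x : AddCircle (1 : ℝ)) := by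
  rw [← AddCircle.coe_neg, coe_eq_coe]
  exact ⟨1, by push_cast; ring⟩

lemma coe_mem_neg_Sset_iff {x y z : ℝ} (hx : 0 < x) (hx1 : x < 1) (hy : 0 < y) (hy1 : y < 1)
    (hz : 0 < z) (hz1 : z < 1) :
    ((x : AddCircle (1 : ℝ)), (y : AddCircle (1 : ℝ)), (z : AddCircle (1 : ℝ))) ∈ -Sset ↔
      2 < x + y + z := by
  rw [Set.mem_neg, Prod.neg_mk, Prod.neg_mk, ← coe_one_sub, ← coe_one_sub, ← coe_one_sub,
    coe_mem_Sset_iff (by linarith) (by linarith) (by linarith) (by linarith) (by linarith)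
      (by linarith)]
  constructor <;> intro h <;> linarith

lemma coe_sum_eq_zero_iff {x y z : ℝ} (hx : 0 < x) (hx1 : x < 1) (hy : 0 < y) (hy1 : y < 1)
    (hz : 0 < z) (hz1 : z < 1) :
    (x : AddCircle (1 : ℝ)) + (y : AddCircle (1 : ℝ)) + (z : AddCircle (1 : ℝ)) = 0 ↔
      x + y + z = 1 ∨ x + y + z = 2 := by
  rw [← AddCircle.coe_add, ← AddCircle.coe_add, ← AddCircle.coe_zero, coe_eq_coe]
  constructor
  · rintro ⟨n, hn⟩
    have h1 : (n : ℝ) < 3 := by linarith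
    have h2 : (0 : ℝ) < n := by linarith
    have h1' : n < 3 := by exact_mod_cast h1
    have h2' : 0 < n := by exact_mod_cast h2
    rcases (by omega : n = 1 ∨ n = 2) with rfl | rfl
    · left; simpa using hn
    · right; simpa using hn
  · rintro (h | h)
    · exact ⟨1, by simpa using h⟩
    · exact ⟨2, by simpa using h⟩

/-- The triples of nontrivial rotation classes with product one are those in `S ∪ -S` together with
those on the subtorus `x + y + z = 0` (commuting rotations). -/
lemma productOne_iff_of_nonzeroCoords {v : AddCircle (1 : ℝ) × AddCircle (1 : ℝ) × AddCircle (1 : ℝ)}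
    (hv : NonzeroCoords v) : ProductOne v ↔ v ∈ Sset ∪ -Sset ∨ v.1 + v.2.1 + v.2.2 = 0 := by
  obtain ⟨a, b, c⟩ := v
  obtain ⟨h1, h2, h3⟩ := hv
  obtain ⟨x, hx, hx1, rfl⟩ := exists_rep h1
  obtain ⟨y, hy, hy1, rfl⟩ := exists_rep h2
  obtain ⟨z, hz, hz1, rfl⟩ := exists_rep h3
  rw [productOne_iff hx hx1 hy hy1 hz hz1, Set.mem_union, coe_mem_Sset_iff hx hx1 hy hy1 hz hz1,
    coe_mem_neg_Sset_iff hx hx1 hy hy1 hz hz1, coe_sum_eq_zero_iff hx hx1 hy hy1 hz hz1,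
    le_iff_lt_or_eq, le_iff_lt_or_eq, eq_comm (a := (2 : ℝ))]
  tauto

lemma nonzeroCoords_of_mem_Sset {v : AddCircle (1 : ℝ) × AddCircle (1 : ℝ) × AddCircle (1 : ℝ)}
    (hv : v ∈ Sset) : NonzeroCoords v ∧ v.1 + v.2.1 + v.2.2 ≠ 0 := by
  obtain ⟨⟨x, y, z⟩, ⟨hx, hy, hz, hs⟩, rfl⟩ := hv
  simp only at hx hy hz hs
  have nz : ∀ t : ℝ, 0 < t → t < 1 → (t : AddCircle (1 : ℝ)) ≠ 0 := by
    intro t h0 h1 h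
    rw [← AddCircle.coe_zero, coe_eq_coe] at h
    obtain ⟨n, hn⟩ := h
    rw [zero_add] at hn
    have h1' : n < 1 := by rw [hn] at h1; exact_mod_cast h1
    have h0' : 0 < n := by rw [hn] at h0; exact_mod_cast h0
    omega
  refine ⟨⟨nz x hx (by linarith), nz y hy (by linarith), nz z hz (by linarith)⟩, ?_⟩
  have := nz (x + y + z) (by linarith) hs
  simpa using this

lemma nonzeroCoords_of_mem {v : AddCircle (1 : ℝ) × AddCircle (1 : ℝ) × AddCircle (1 : ℝ)}
    (hv : v ∈ Sset ∪ -Sset) : NonzeroCoords v ∧ v.1 + v.2.1 + v.2.2 ≠ 0 := by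
  rcases hv with hv | hv
  · exact nonzeroCoords_of_mem_Sset hv
  · obtain ⟨⟨h1, h2, h3⟩, h4⟩ := nonzeroCoords_of_mem_Sset hv
    refine ⟨⟨by simpa using h1, by simpa using h2, by simpa using h3⟩, fun h => h4 ?_⟩
    have : (-v).1 + (-v).2.1 + (-v).2.2 = -(v.1 + v.2.1 + v.2.2) := by
      simp; abel
    rw [this, h, neg_zero]

/-! ### Powers of classes and the torsion group `H` -/

/-- The conjugacy class of the rotation with parameter `θ`. -/
def rotClass (θ : AddCircle (1 : ℝ)) : Set PSL(2, ℝ) := {y | IsConj (rotP θ) y}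

lemma image_zpow_rotClass (θ : AddCircle (1 : ℝ)) (ρ : ℤ) :
    (fun c => c ^ ρ) '' rotClass θ = rotClass (ρ • θ) := by
  ext g
  simp only [rotClass, Set.mem_image, Set.mem_ofPred_eq, isConj_iff, ← rotP_zpow]
  constructor
  · rintro ⟨_, ⟨h, rfl⟩, rfl⟩
    exact ⟨h, by rw [conj_zpow]⟩
  · rintro ⟨h, rfl⟩
    exact ⟨_, ⟨h, rfl⟩, conj_zpow⟩

lemma rotClass_subset_iff (θ : AddCircle (1 : ℝ)) (k : ℕ) :
    rotClass θ ⊆ {g | g ^ k = 1 ∧ g ≠ 1} ↔ k • θ = 0 ∧ θ ≠ 0 := by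
  rw [← rotP_eq_one_iff (k • θ), ← rotP_pow, Ne, ← rotP_eq_one_iff θ]
  constructor
  · intro h
    exact h (IsConj.refl _)
  · rintro ⟨h1, h2⟩ g hg
    obtain ⟨h, rfl⟩ := isConj_iff.1 hg
    refine ⟨by rw [conj_pow, h1]; simp, fun he => h2 ?_⟩
    simpa using he

lemma exists_eq_rotClass {k : ℕ} (hk : k ≠ 0) {C : Set PSL(2, ℝ)} (hC : IsConjClass C)
    (h : C ⊆ {g | g ^ k = 1 ∧ g ≠ 1}) : ∃ θ, C = rotClass θ := by
  obtain ⟨x, rfl⟩ := hC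
  obtain ⟨h1, h2⟩ := h (IsConj.refl x)
  obtain ⟨θ, hθ⟩ := exists_isConj_rotP hk h1 h2
  refine ⟨θ, Set.ext fun y => ⟨fun hy => hθ.trans hy, fun hy => hθ.symm.trans hy⟩⟩

lemma rotClass_mem_BSet_iff (k l m : ℕ)
    (v : AddCircle (1 : ℝ) × AddCircle (1 : ℝ) × AddCircle (1 : ℝ)) :
    (rotClass v.1, rotClass v.2.1, rotClass v.2.2) ∈ BSet k l m PSL(2, ℝ) ↔
      v ∈ Hset k l m ∧ NonzeroCoords v ∧ ProductOne v := by
  simp only [BSet, Set.mem_ofPred_eq, rotClass_subset_iff, Hset, NonzeroCoords, ProductOne]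
  constructor
  · rintro ⟨-, -, -, ⟨c, hc, d, hd, e, he, h⟩, h1, h2, h3⟩
    exact ⟨⟨h1.1, h2.1, h3.1⟩, ⟨h1.2, h2.2, h3.2⟩, c, d, e, hc, hd, he, h⟩
  · rintro ⟨⟨h1, h2, h3⟩, ⟨h1', h2', h3'⟩, c, d, e, hc, hd, he, h⟩
    exact ⟨⟨_, rfl⟩, ⟨_, rfl⟩, ⟨_, rfl⟩, ⟨c, hc, d, hd, e, he, h⟩, ⟨h1, h1'⟩, ⟨h2, h2'⟩, h3, h3'⟩

lemma Hset_finite {k l m : ℕ} (hk : 0 < k) (hl : 0 < l) (hm : 0 < m) : (Hset k l m).Finite :=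
  ((AddCircle.finite_torsion (1 : ℝ) hk).prod ((AddCircle.finite_torsion (1 : ℝ) hl).prod
    (AddCircle.finite_torsion (1 : ℝ) hm))).subset fun _ hv => hv

lemma zsmul_mem_Hset {k l m : ℕ} {v} (hv : v ∈ Hset k l m) (ρ : ℤ) : ρ • v ∈ Hset k l m := by
  obtain ⟨h1, h2, h3⟩ := hv
  refine ⟨?_, ?_, ?_⟩
  · change k • ρ • v.1 = 0
    rw [smul_comm, h1, smul_zero]
  · change l • ρ • v.2.1 = 0
    rw [smul_comm, h2, smul_zero]
  · change m • ρ • v.2.2 = 0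
    rw [smul_comm, h3, smul_zero]

lemma lcm_nsmul_eq_zero {k l m : ℕ} {v} (hv : v ∈ Hset k l m) :
    Nat.lcm k (Nat.lcm l m) • v = 0 := by
  obtain ⟨h1, h2, h3⟩ := hv
  have aux : ∀ {p n : ℕ} {θ : AddCircle (1 : ℝ)}, p • θ = 0 → p ∣ n → n • θ = 0 := by
    rintro p _ θ h ⟨q, rfl⟩
    rw [mul_comm, mul_smul, h, smul_zero]
  refine Prod.ext (aux h1 (Nat.dvd_lcm_left _ _)) (Prod.ext ?_ ?_)
  · exact aux h2 ((Nat.dvd_lcm_left l m).trans (Nat.dvd_lcm_right _ _))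
  · exact aux h3 ((Nat.dvd_lcm_right l m).trans (Nat.dvd_lcm_right _ _))

/-- Multiplication by a representative of a unit is invertible on `H`. -/
lemma exists_inverse {k l m : ℕ} (r : (ZMod (Nat.lcm k (Nat.lcm l m)))ˣ) {ρ : ℤ}
    (hρ : (ρ : ZMod (Nat.lcm k (Nat.lcm l m))) = r) :
    ∃ σ : ℤ, ∀ v ∈ Hset k l m, σ • ρ • v = v := by
  obtain ⟨σ, hσ⟩ := ZMod.intCast_surjective
    ((r⁻¹ : (ZMod (Nat.lcm k (Nat.lcm l m)))ˣ) : ZMod (Nat.lcm k (Nat.lcm l m)))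
  refine ⟨σ, fun v hv => ?_⟩
  have h : ((σ * ρ - 1 : ℤ) : ZMod (Nat.lcm k (Nat.lcm l m))) = 0 := by
    push_cast
    rw [hσ, hρ, Units.inv_mul, sub_self]
  obtain ⟨q, hq⟩ := (ZMod.intCast_zmod_eq_zero_iff_dvd _ _).1 h
  have hq' : σ * ρ = q * (Nat.lcm k (Nat.lcm l m) : ℕ) + 1 := by linarith
  rw [smul_smul, hq', add_smul, one_smul, mul_smul, natCast_zsmul, lcm_nsmul_eq_zero hv,
    smul_zero, zero_add]

theorem MSet_psl2R_eq (k l m : ℕ) (hk : 2 ≤ k) (hl : 2 ≤ l) (hm : 2 ≤ m) :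
    MSet k l m (Nat.lcm k (Nat.lcm l m)) PSL(2, ℝ) =
      {r : (ZMod (Nat.lcm k (Nat.lcm l m)))ˣ |
        ∀ ρ : ℤ, ((ρ : ZMod (Nat.lcm k (Nat.lcm l m))) = (r : ZMod (Nat.lcm k (Nat.lcm l m)))) →
          (fun v => ρ • v) '' (Hset k l m ∩ (Sset ∪ -Sset)) =
            Hset k l m ∩ (Sset ∪ -Sset)} := by
  ext r
  simp only [MSet, Set.mem_ofPred_eq]
  refine forall_congr' fun ρ => forall_congr' fun hρ => ?_
  obtain ⟨σ, hσ⟩ := exists_inverse r hρ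
  have hNZ : ∀ v ∈ Hset k l m, NonzeroCoords v → NonzeroCoords (ρ • v) := by
    intro v hv hnz
    have e := hσ v hv
    refine ⟨fun h => hnz.1 ?_, fun h => hnz.2.1 ?_, fun h => hnz.2.2 ?_⟩
    · rw [← e, Prod.smul_fst, h, smul_zero]
    · rw [← e, Prod.smul_snd, Prod.smul_fst, h, smul_zero]
    · rw [← e, Prod.smul_snd, Prod.smul_snd, h, smul_zero]
  have hsum : ∀ v ∈ Hset k l m,
      ((ρ • v).1 + (ρ • v).2.1 + (ρ • v).2.2 = 0 ↔ v.1 + v.2.1 + v.2.2 = 0) := by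
    intro v hv
    have lin : ∀ (n : ℤ) (w : AddCircle (1 : ℝ) × AddCircle (1 : ℝ) × AddCircle (1 : ℝ)),
        (n • w).1 + (n • w).2.1 + (n • w).2.2 = n • (w.1 + w.2.1 + w.2.2) := by
      intro n w
      simp [smul_add]
    constructor
    · intro h
      have := lin σ (ρ • v)
      rwa [h, smul_zero, hσ v hv] at this
    · intro h
      rw [lin, h, smul_zero]
  constructor
  · intro h
    have hsub : (fun v => ρ • v) '' (Hset k l m ∩ (Sset ∪ -Sset)) ⊆
        Hset k l m ∩ (Sset ∪ -Sset) := by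
      rintro _ ⟨v, ⟨hH, hS⟩, rfl⟩
      obtain ⟨hnz, hs⟩ := nonzeroCoords_of_mem hS
      have h1 := h _ ((rotClass_mem_BSet_iff k l m v).2
        ⟨hH, hnz, (productOne_iff_of_nonzeroCoords hnz).2 (Or.inl hS)⟩)
      simp only [image_zpow_rotClass] at h1
      obtain ⟨h2, h3, h4⟩ := (rotClass_mem_BSet_iff k l m (ρ • v)).1 h1
      refine ⟨h2, ((productOne_iff_of_nonzeroCoords h3).1 h4).resolve_right ?_⟩
      rwa [hsum v hH]
    have hfin : (Hset k l m ∩ (Sset ∪ -Sset)).Finite :=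
      (Hset_finite (by omega) (by omega) (by omega)).subset Set.inter_subset_left
    have hinj : Set.InjOn (fun v => ρ • v) (Hset k l m ∩ (Sset ∪ -Sset)) := by
      intro v hv w hw hvw
      rw [← hσ v hv.1, ← hσ w hw.1]
      exact congrArg (σ • ·) hvw
    -- An injective self-map of a finite set is onto.
    exact Set.eq_of_subset_of_ncard_le hsub (hinj.ncard_image).ge hfin
  · rintro h ⟨C, D, E⟩ hT
    obtain ⟨hC, hD, hE, -, hk', hl', hm'⟩ := id hT
    obtain ⟨a, rfl⟩ := exists_eq_rotClass (by omega) hC hk'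
    obtain ⟨b, rfl⟩ := exists_eq_rotClass (by omega) hD hl'
    obtain ⟨c, rfl⟩ := exists_eq_rotClass (by omega) hE hm'
    obtain ⟨hH, hnz, hp⟩ := (rotClass_mem_BSet_iff k l m (a, b, c)).1 hT
    simp only [image_zpow_rotClass]
    refine (rotClass_mem_BSet_iff k l m (ρ • (a, b, c))).2
      ⟨zsmul_mem_Hset hH ρ, hNZ _ hH hnz, (productOne_iff_of_nonzeroCoords (hNZ _ hH hnz)).2 ?_⟩
    rcases (productOne_iff_of_nonzeroCoords hnz).1 hp with hS | hs
    · left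
      exact (h ▸ Set.mem_image_of_mem (fun v => ρ • v) ⟨hH, hS⟩ :
        ρ • (a, b, c) ∈ Hset k l m ∩ (Sset ∪ -Sset)).2
    · right
      exact (hsum _ hH).2 hs
end
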